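/- arXiv:1102.2478 — 2 statements merged into one kernel-verified Lean document; each statement's English description precedes it below -/
import Mathlib

section
/- A nonsingular complex plane projective curve of degree d ≥ 2 that is reduced and contains no line has exactly 3d(d-2) inflection points counted with multiplicity, i.e., the intersection number of the curve with its Hessian curve equals 3d(d-2). -/
open MvPolynomial

noncomputable section

/-- The Hessian polynomial of a homogeneous polynomial in three variables. -/
def hessPoly (F : MvPolynomial (Fin 3) ℂ) : MvPolynomial (Fin 3) ℂ :=
  Matrix.det (Matrix.of fun i j : Fin 3 => pderiv i (pderiv j F))

/-- The multiplicative set of polynomials not vanishing at `v`. -/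
def nonvanishing (v : Fin 3 → ℂ) : Submonoid (MvPolynomial (Fin 3) ℂ) where
  carrier := {f | aeval v f ≠ 0}
  one_mem' := by simp
  mul_mem' := by
    intro f g hf hg
    simp only [Set.mem_setOf_eq, map_mul] at *
    exact mul_ne_zero hf hg

/-- The intersection multiplicity of the curves `{F = 0}` and `{G = 0}` at the
point `v` of the affine chart `{x_i = 1}`: the ℂ-dimension of the local ring
of the plane `{x_i = 1}` at `v` modulo `(F, G)`. -/
def localMult (F G : MvPolynomial (Fin 3) ℂ) (v : Fin 3 → ℂ) (i : Fin 3) : ℕ :=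
  Module.finrank ℂ
    (Localization (nonvanishing v) ⧸
      Ideal.span {algebraMap (MvPolynomial (Fin 3) ℂ) (Localization (nonvanishing v)) F,
        algebraMap (MvPolynomial (Fin 3) ℂ) (Localization (nonvanishing v)) G,
        algebraMap (MvPolynomial (Fin 3) ℂ) (Localization (nonvanishing v)) (X i - 1)})

/-- The intersection multiplicity of `{F = 0}` and `{G = 0}` at a point of the
complex projective plane, computed in an affine chart containing the point. -/
def projMult (F G : MvPolynomial (Fin 3) ℂ) (p : Projectivization ℂ (Fin 3 → ℂ)) : ℕ :=
  let i := Classical.choose (Function.ne_iff.mp p.rep_nonzero)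
  localMult F G ((p.rep i)⁻¹ • p.rep) i

lemma chain_rule (γ : Fin 3 → Polynomial ℂ) (f : MvPolynomial (Fin 3) ℂ) :
    Polynomial.derivative (aeval γ f) =
      ∑ i, aeval γ (pderiv i f) * Polynomial.derivative (γ i) := by
  induction f using MvPolynomial.induction_on with
  | C a => simp [MvPolynomial.algebraMap_eq, ← Polynomial.C_eq_algebraMap]
  | add p q hp hq => simp only [map_add, hp, hq, add_mul, Finset.sum_add_distrib]
  | mul_X p i hp =>
    simp only [map_mul, aeval_X, Polynomial.derivative_mul, hp, Derivation.leibniz, pderiv_X,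
      map_add, smul_eq_mul, Fin.sum_univ_three]
    fin_cases i <;> simp [Pi.single_apply] <;> ring

lemma taylor_one {R : Type*} [CommRing R] [Algebra ℂ R] (a u : Fin 3 → R) (e : R)
    (f : MvPolynomial (Fin 3) ℂ) :
    ∃ r, aeval (fun i => a i + e * u i) f =
      aeval a f + e * (∑ i, aeval a (pderiv i f) * u i) + e ^ 2 * r := by
  induction f using MvPolynomial.induction_on with
  | C c => exact ⟨0, by simp⟩
  | add p q hp hq =>
    obtain ⟨r, hr⟩ := hp
    obtain ⟨s, hs⟩ := hq
    refine ⟨r + s, ?_⟩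
    simp only [map_add, hr, hs, add_mul, Finset.sum_add_distrib]
    ring
  | mul_X p i hp =>
    obtain ⟨r, hr⟩ := hp
    refine ⟨r * (a i + e * u i) + (∑ j, aeval a (pderiv j p) * u j) * u i, ?_⟩
    simp only [map_mul, aeval_X, hr, Derivation.leibniz, pderiv_X,
      map_add, smul_eq_mul, Fin.sum_univ_three]
    fin_cases i <;> simp [Pi.single_apply] <;> ring

open Matrix in
lemma hess_identity {R : Type*} [CommRing R] (H : Matrix (Fin 3) (Fin 3) R) (hH : H.IsSymm)
    (x y u : Fin 3 → R) :
    ∃ r : R × R × R, (x ⬝ᵥ H *ᵥ u) ^ 2 * (y ⬝ᵥ H *ᵥ y) =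
      (x ⬝ᵥ H *ᵥ x) * r.1 + (x ⬝ᵥ H *ᵥ y) * r.2.1 + H.det * r.2.2 := by
  let M : Matrix (Fin 3) (Fin 3) R := Matrix.of ![x, y, u]
  have h1 : (M * H * Mᵀ).det = H.det * M.det ^ 2 := by
    rw [det_mul, det_mul, det_transpose]; ring
  have sym : ∀ a b : Fin 3 → R, a ⬝ᵥ H *ᵥ b = b ⬝ᵥ H *ᵥ a := by
    intro a b
    rw [dotProduct_mulVec, dotProduct_comm, ← Matrix.mulVec_transpose, hH]
  have h2 : ∀ i j, (M * H * Mᵀ) i j = (![x, y, u] i) ⬝ᵥ H *ᵥ (![x, y, u] j) := by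
    intro i j
    rw [Matrix.mul_assoc, Matrix.mul_apply]
    simp only [dotProduct, mulVec, M, Matrix.mul_apply, Matrix.transpose_apply, Matrix.of_apply]
  rw [det_fin_three] at h1
  simp only [h2] at h1
  simp only [Matrix.cons_val_zero, Matrix.cons_val_one, Matrix.cons_val] at h1
  rw [sym y x, sym u x, sym u y] at h1
  refine ⟨((y ⬝ᵥ H *ᵥ y) * (u ⬝ᵥ H *ᵥ u) - (y ⬝ᵥ H *ᵥ u) ^ 2,
    2 * (y ⬝ᵥ H *ᵥ u) * (x ⬝ᵥ H *ᵥ u) - (x ⬝ᵥ H *ᵥ y) * (u ⬝ᵥ H *ᵥ u), - M.det ^ 2), ?_⟩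
  linear_combination -h1

lemma euler_aeval {R : Type*} [CommRing R] [Algebra ℂ R] {d : ℕ} {F : MvPolynomial (Fin 3) ℂ}
    (hF : F.IsHomogeneous d) (γ : Fin 3 → R) :
    ∑ i, γ i * aeval γ (pderiv i F) = d * aeval γ F := by
  have := congrArg (aeval γ) hF.sum_X_mul_pderiv
  simpa [nsmul_eq_mul] using this

/-- existence of a nonzero zero of an irreducible polynomial. -/
lemma exists_zero {P : MvPolynomial (Fin 3) ℂ} (hP : Irreducible P) :
    ∃ v : Fin 3 → ℂ, v ≠ 0 ∧ aeval v P = 0 := by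
  by_contra! hcon
  have key : ∀ i, P ∣ (X i : MvPolynomial (Fin 3) ℂ) := by
    intro i
    have h1 : (X i : MvPolynomial (Fin 3) ℂ) ∈ (Ideal.span {P}).radical := by
      rw [← MvPolynomial.vanishingIdeal_zeroLocus_eq_radical (K := ℂ)]
      rw [MvPolynomial.mem_vanishingIdeal_iff]
      intro x hx
      rw [MvPolynomial.mem_zeroLocus_iff] at hx
      have h0 := hx P (Ideal.mem_span_singleton_self P)
      have : x = 0 := by
        by_contra h
        exact hcon x h h0
      simp [this]
    obtain ⟨n, hn⟩ := h1
    rw [Ideal.mem_span_singleton] at hn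
    exact hP.prime.dvd_of_dvd_pow hn
  have h0 := key 0
  have h1 := key 1
  have : Associated P (X 0 : MvPolynomial (Fin 3) ℂ) :=
    hP.associated_of_dvd (MvPolynomial.X_prime (R := ℂ) (i := (0 : Fin 3))).irreducible h0
  rw [this.dvd_iff_dvd_left] at h1
  obtain ⟨c, hc⟩ := h1
  have := congrArg (aeval (![0,1,0] : Fin 3 → ℂ)) hc
  simp at this

lemma aeval_scale {R : Type*} [CommRing R] [Algebra ℂ R] {d : ℕ} {F : MvPolynomial (Fin 3) ℂ}
    (hF : F.IsHomogeneous d) (e : R) (a : Fin 3 → R) :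
    aeval (fun i => e * a i) F = e ^ d * aeval a F := by
  rw [MvPolynomial.aeval_def, MvPolynomial.aeval_def, MvPolynomial.eval₂_eq, MvPolynomial.eval₂_eq,
    Finset.mul_sum]
  apply Finset.sum_congr rfl
  intro m hm
  have := hF (MvPolynomial.mem_support_iff.mp hm)
  have h2 : ∑ i ∈ m.support, m i = d := by
    rw [← this, Finsupp.weight_apply]
    simp [Finsupp.sum]
  simp only [mul_pow, Finset.prod_mul_distrib, Finset.prod_pow_eq_pow_sum, h2]
  ring

/-- If `F` vanishes on the plane `ℓ = 0` then the linear form divides `F`. -/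
lemma linear_dvd {F : MvPolynomial (Fin 3) ℂ} {d : ℕ} (hF : F.IsHomogeneous d)
    (l u v w c : Fin 3 → ℂ)
    (hlu : ∑ i, l i * u i = 1) (hcv : ∑ i, c i * v i = 1) (hlv : ∑ i, l i * v i = 0)
    (hw : w = ![l 1 * c 2 - l 2 * c 1, l 2 * c 0 - l 0 * c 2, l 0 * c 1 - l 1 * c 0])
    (hvan : ∀ t : ℂ, aeval (fun i => v i + t * w i) F = 0) :
    ∃ L : MvPolynomial (Fin 3) ℂ, L.IsHomogeneous 1 ∧ L ∣ F := by
  classical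
  let L : MvPolynomial (Fin 3) ℂ := ∑ i, C (l i) * X i
  have hL : L.IsHomogeneous 1 := by
    apply MvPolynomial.IsHomogeneous.sum
    intro i _
    simpa using (isHomogeneous_C (Fin 3) (l i)).mul (isHomogeneous_X ℂ i)
  refine ⟨L, hL, ?_⟩
  have hD : v 0 * (w 1 * u 2 - w 2 * u 1) + v 1 * (w 2 * u 0 - w 0 * u 2)
      + v 2 * (w 0 * u 1 - w 1 * u 0) = 1 := by
    simp only [Fin.sum_univ_three] at hlu hcv hlv
    simp only [hw, Matrix.cons_val_zero, Matrix.cons_val_one, Matrix.cons_val]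
    linear_combination (l 0 * u 0 + l 1 * u 1 + l 2 * u 2) * hcv + hlu -
      (c 0 * u 0 + c 1 * u 1 + c 2 * u 2) * hlv
  let z : Fin 3 → MvPolynomial (Fin 3) ℂ := fun i => X i - L * C (u i)
  have hz : L ∣ F - aeval z F := by
    rw [← Ideal.mem_span_singleton, ← Ideal.Quotient.eq]
    have e1 : (Ideal.Quotient.mkₐ ℂ (Ideal.span {L})).comp (aeval z) =
        (Ideal.Quotient.mkₐ ℂ (Ideal.span {L})) := by
      ext i
      simp only [AlgHom.comp_apply, aeval_X, Ideal.Quotient.mkₐ_eq_mk]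
      rw [Ideal.Quotient.eq, Ideal.mem_span_singleton]
      exact ⟨-C (u i), by simp [z]⟩
    exact (congrArg (fun f => f F) e1).symm
  have hzero : aeval z F = 0 := by
    -- first coordinate
    let A : MvPolynomial (Fin 3) ℂ := z 0 * C (w 1 * u 2 - w 2 * u 1) +
      z 1 * C (w 2 * u 0 - w 0 * u 2) + z 2 * C (w 0 * u 1 - w 1 * u 0)
    have hprod : A * aeval z F = 0 := by
      apply MvPolynomial.funext
      intro x
      rw [map_mul, map_zero]
      by_cases hA : eval x A = 0
      · rw [hA, zero_mul]
      · have ez : eval x (aeval z F) = aeval (fun i => eval x (z i)) F := by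
          rw [← MvPolynomial.coe_aeval_eq_eval]
          change aeval x (aeval z F) = _
          rw [← AlgHom.comp_apply, MvPolynomial.comp_aeval]
          rfl
        rw [ez]
        set a := eval x A with ha
        set y : Fin 3 → ℂ := fun i => eval x (z i) with hy
        have hly : ∑ i, l i * y i = 0 := by
          simp only [hy, z, L, Fin.sum_univ_three] at hlu ⊢
          simp only [map_sub, map_mul, map_add, eval_X, eval_C]
          linear_combination -(l 0 * x 0 + l 1 * x 1 + l 2 * x 2) * hlu
        have ha' : a = y 0 * (w 1 * u 2 - w 2 * u 1) + y 1 * (w 2 * u 0 - w 0 * u 2)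
            + y 2 * (w 0 * u 1 - w 1 * u 0) := by
          simp [ha, A, hy]
        let b := v 0 * (y 1 * u 2 - y 2 * u 1) + v 1 * (y 2 * u 0 - y 0 * u 2)
            + v 2 * (y 0 * u 1 - y 1 * u 0)
        have hyy : ∀ i, y i = a * v i + b * w i := by
          have hvwy : v 0 * (w 1 * y 2 - w 2 * y 1) + v 1 * (w 2 * y 0 - w 0 * y 2)
              + v 2 * (w 0 * y 1 - w 1 * y 0) = 0 := by
            simp only [Fin.sum_univ_three] at hlu hcv hlv hly
            simp only [hw, Matrix.cons_val_zero, Matrix.cons_val_one, Matrix.cons_val]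
            linear_combination (c 0 * v 0 + c 1 * v 1 + c 2 * v 2) * hly -
              (c 0 * y 0 + c 1 * y 1 + c 2 * y 2) * hlv
          intro i
          rw [ha']
          simp only [b]
          fin_cases i
          · simp only [Fin.zero_eta, Fin.mk_one, Fin.reduceFinMk]
            linear_combination (-y 0) * hD + u 0 * hvwy
          · simp only [Fin.zero_eta, Fin.mk_one, Fin.reduceFinMk]
            linear_combination (-y 1) * hD + u 1 * hvwy
          · simp only [Fin.zero_eta, Fin.mk_one, Fin.reduceFinMk]
            linear_combination (-y 2) * hD + u 2 * hvwy
        have e2 : y = fun i => a * (v i + (b / a) * w i) := by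
          funext i
          rw [hyy i]; field_simp
        rw [e2]
        rw [aeval_scale hF, hvan, mul_zero, mul_zero]
    rcases mul_eq_zero.mp hprod with h | h
    · exfalso
      have h1 := congrArg (eval v) h
      simp only [A, z, L, Fin.sum_univ_three, map_sub, map_mul, map_add, eval_X, eval_C,
        map_zero] at h1
      simp only [Fin.sum_univ_three] at hlv
      rw [hlv] at h1
      exact one_ne_zero (α := ℂ) (by linear_combination h1 - hD)
    · exact h
  rwa [hzero, sub_zero] at hz

lemma pderiv_swap (i j : Fin 3) (f : MvPolynomial (Fin 3) ℂ) :
    pderiv i (pderiv j f) = pderiv j (pderiv i f) := by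
  induction f using MvPolynomial.induction_on with
  | C c => simp
  | add p q hp hq => simp only [map_add, hp, hq]
  | mul_X p k hp =>
    have hk : ∀ a b : Fin 3, pderiv a (Pi.single (M := fun _ => MvPolynomial (Fin 3) ℂ) b 1 k) = 0 := by
      intro a b
      by_cases h : k = b
      · subst h; simp
      · simp [h]
    simp only [Derivation.leibniz, pderiv_X, map_add, smul_eq_mul, hp, hk]
    ring

lemma second_order {d : ℕ} (hd : 2 ≤ d) {F : MvPolynomial (Fin 3) ℂ}
    (hF : F.IsHomogeneous d) (γ U y n : Fin 3 → Polynomial ℂ) (k : ℕ)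
    (hy : ∀ i, y i = Polynomial.derivative (γ i))
    (hn : ∀ i, n i = aeval γ (pderiv i F))
    (hFγ : Polynomial.X ^ (k + 3) ∣ aeval γ F)
    (hHγ : Polynomial.X ^ (k + 3) ∣ aeval γ (hessPoly F))
    (hnU : Polynomial.eval 0 (∑ i, n i * U i) = 1) :
    Polynomial.X ^ (k + 1) ∣ ∑ i, n i * Polynomial.derivative (y i) := by
  have hder_dvd : ∀ (j : ℕ) (f : Polynomial ℂ), Polynomial.X ^ (j + 1) ∣ f →
      Polynomial.X ^ j ∣ Polynomial.derivative f := by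
    rintro j f ⟨g, rfl⟩
    refine ⟨((j + 1 : ℕ) : Polynomial ℂ) * g + Polynomial.X * Polynomial.derivative g, ?_⟩
    simp only [Polynomial.derivative_mul, Polynomial.derivative_X_pow]
    simp
    ring
  have hF1 := hder_dvd _ _ hFγ
  have hF2 := hder_dvd _ _ hF1
  let H : Matrix (Fin 3) (Fin 3) (Polynomial ℂ) :=
    Matrix.of fun i j => aeval γ (pderiv i (pderiv j F))
  have hsymm : H.IsSymm := by
    ext i j
    simp [H, pderiv_swap i j]
  have hdet : H.det = aeval γ (hessPoly F) := by
    rw [hessPoly]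
    have := AlgHom.map_det (aeval γ : MvPolynomial (Fin 3) ℂ →ₐ[ℂ] Polynomial ℂ)
      (Matrix.of fun i j : Fin 3 => pderiv i (pderiv j F))
    rw [this]
    rfl
  have hHγ' : H.mulVec γ = fun i => ((d - 1 : ℕ) : Polynomial ℂ) * n i := by
    funext i
    have := euler_aeval (hF.pderiv (i := i)) γ
    rw [hn i, ← this]
    simp only [Matrix.mulVec, dotProduct, H, Matrix.of_apply]
    apply Finset.sum_congr rfl
    intro j _
    rw [pderiv_swap i j, mul_comm]
  have sym : ∀ b : Fin 3 → Polynomial ℂ, dotProduct γ (H.mulVec b) =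
      ((d - 1 : ℕ) : Polynomial ℂ) * ∑ i, n i * b i := by
    intro b
    rw [Matrix.dotProduct_mulVec, ← Matrix.mulVec_transpose, hsymm, hHγ', Finset.mul_sum]
    exact Finset.sum_congr rfl fun i _ => mul_assoc _ _ _
  have hc1 : Polynomial.derivative (aeval γ F) = ∑ i, n i * y i := by
    rw [chain_rule γ F]
    simp only [hn, hy]
  have hc2 : Polynomial.derivative (Polynomial.derivative (aeval γ F)) =
      dotProduct y (H.mulVec y) + ∑ i, n i * Polynomial.derivative (y i) := by
    have hn' : ∀ i, Polynomial.derivative (n i) = H.mulVec y i := by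
      intro i
      rw [hn, chain_rule γ (pderiv i F)]
      simp only [Matrix.mulVec, dotProduct]
      refine Finset.sum_congr rfl fun j _ => ?_
      rw [pderiv_swap j i, hy]
      rfl
    rw [hc1, Polynomial.derivative_sum]
    simp only [Polynomial.derivative_mul, Finset.sum_add_distrib, hn']
    refine congrArg₂ (· + ·) ?_ rfl
    exact Finset.sum_congr rfl fun i _ => mul_comm _ _
  obtain ⟨⟨r1, r2, r3⟩, hr⟩ := hess_identity H hsymm γ y U
  simp only at hr
  have hnγ : ∑ i, n i * γ i = d * aeval γ F := by
    rw [← euler_aeval hF γ]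
    exact Finset.sum_congr rfl fun i _ => by rw [hn, mul_comm]
  rw [sym, sym, sym, hdet, ← hc1, hnγ] at hr
  have hle : ∀ {a b : ℕ} {f : Polynomial ℂ}, a ≤ b → Polynomial.X ^ b ∣ f →
    Polynomial.X ^ a ∣ f := fun hab hf => (pow_dvd_pow _ hab).trans hf
  have hXn : ∀ f : Polynomial ℂ, Polynomial.eval 0 f ≠ 0 → ¬ Polynomial.X ∣ f := by
    intro f hf
    rwa [Polynomial.X_dvd_iff, Polynomial.coeff_zero_eq_eval_zero]
  have hq : Polynomial.X ^ (k + 1) ∣ dotProduct y (H.mulVec y) := by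
    have h1 : Polynomial.X ^ (k + 1) ∣ ((((d - 1 : ℕ) : Polynomial ℂ) * ∑ i, n i * U i) ^ 2 *
        dotProduct y (H.mulVec y)) := by
      rw [hr]
      refine dvd_add (dvd_add ?_ ?_) ?_
      · exact Dvd.dvd.mul_right (Dvd.dvd.mul_left (Dvd.dvd.mul_left (hle (by omega) hFγ) _) _) _
      · exact Dvd.dvd.mul_right (Dvd.dvd.mul_left (hle (by omega) hF1) _) _
      · exact Dvd.dvd.mul_right (hle (by omega) hHγ) _
    refine Polynomial.prime_X.pow_dvd_of_dvd_mul_left _ ?_ h1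
    apply hXn
    rw [Polynomial.eval_pow, Polynomial.eval_mul, hnU]
    have : ((d - 1 : ℕ) : ℂ) ≠ 0 := by
      rw [Nat.cast_ne_zero]; omega
    simpa using this
  have hfin : Polynomial.X ^ (k + 1) ∣ ∑ i, n i * Polynomial.derivative (y i) := by
    rw [hc2] at hF2
    exact (dvd_add_right hq).mp hF2
  exact hfin

set_option maxHeartbeats 1000000 in
lemma core_local {d : ℕ} (hd : 2 ≤ d) {F P Q : MvPolynomial (Fin 3) ℂ}
    (hF : F.IsHomogeneous d) (hFP : F = P * Q) (hPH : P ∣ hessPoly F)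
    (l u v w : Fin 3 → ℂ) (hPv : aeval v P = 0)
    (hl : ∀ i, l i = aeval v (pderiv i F))
    (hlu : ∑ i, l i * u i = 1) (hlw : ∑ i, l i * w i = 0) :
    aeval (fun i => Polynomial.C (v i) + Polynomial.X * Polynomial.C (w i)) P = 0 := by
  by_contra hg
  set γ₀ : Fin 3 → Polynomial ℂ :=
    fun i => Polynomial.C (v i) + Polynomial.X * Polynomial.C (w i) with hγ₀
  have ev0 : ∀ (γ : Fin 3 → Polynomial ℂ) (f : MvPolynomial (Fin 3) ℂ),
      Polynomial.eval 0 (aeval γ f) = aeval (fun i => Polynomial.eval 0 (γ i)) f := by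
    intro γ f
    rw [← Polynomial.coe_aeval_eq_eval]
    change Polynomial.aeval (0:ℂ) (aeval γ f) = _
    rw [← AlgHom.comp_apply, MvPolynomial.comp_aeval]
  have hγ₀0 : (fun i => Polynomial.eval 0 (γ₀ i)) = v := by
    funext i; simp [hγ₀]
  have hder : ∀ i, aeval v (pderiv i F) = aeval v Q * aeval v (pderiv i P) := by
    intro i
    rw [hFP, Derivation.leibniz]
    simp only [map_add, smul_eq_mul, map_mul, hPv, zero_mul, zero_add]
  set p : Fin 3 → ℂ := fun i => aeval v (pderiv i P) with hp
  have hlp : ∀ i, l i = aeval v Q * p i := fun i => by rw [hl, hder]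
  have hpu : aeval v Q * ∑ i, p i * u i = 1 := by
    rw [← hlu, Finset.mul_sum]; simp only [hlp, mul_assoc]
  have hQ0 : aeval v Q ≠ 0 := left_ne_zero_of_mul_eq_one hpu
  have hpu0 : ∑ i, p i * u i ≠ 0 := right_ne_zero_of_mul_eq_one hpu
  have hpw : ∑ i, p i * w i = 0 := by
    have : aeval v Q * ∑ i, p i * w i = 0 := by
      rw [← hlw, Finset.mul_sum]; simp only [hlp, mul_assoc]
    exact (mul_eq_zero.mp this).resolve_left hQ0
  obtain ⟨h, hfac, hnd⟩ := Polynomial.exists_eq_pow_rootMultiplicity_mul_and_not_dvd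
    (aeval γ₀ P) hg 0
  set m := Polynomial.rootMultiplicity 0 (aeval γ₀ P) with hm
  simp only [map_zero, sub_zero] at hfac hnd
  have hh0 : Polynomial.eval 0 h ≠ 0 := by
    rwa [Polynomial.X_dvd_iff, Polynomial.coeff_zero_eq_eval_zero] at hnd
  have e0 : Polynomial.eval 0 (aeval γ₀ P) = 0 := by rw [ev0, hγ₀0, hPv]
  have e1 : Polynomial.eval 0 (Polynomial.derivative (aeval γ₀ P)) = 0 := by
    rw [chain_rule, Polynomial.eval_finsetSum]
    refine Eq.trans ?_ hpw
    apply Finset.sum_congr rfl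
    intro i _
    rw [Polynomial.eval_mul, ev0, hγ₀0]
    simp [hγ₀, hp]
  clear_value m
  obtain ⟨k, rfl⟩ : ∃ k, m = k + 2 := by
    rcases m with _ | _ | k
    · rw [hfac] at e0; simp [hh0] at e0
    · rw [hfac] at e1; simp [hh0] at e1
    · exact ⟨k, rfl⟩
  obtain ⟨s, hs0, hs⟩ : ∃ s : ℂ, s ≠ 0 ∧ Polynomial.eval 0 h + s * ∑ i, p i * u i = 0 := by
    refine ⟨- Polynomial.eval 0 h / ∑ i, p i * u i, div_ne_zero (neg_ne_zero.mpr hh0) hpu0, ?_⟩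
    field_simp
    ring
  set e : Polynomial ℂ := Polynomial.C s * Polynomial.X ^ (k + 2) with he
  set γ : Fin 3 → Polynomial ℂ := fun i => γ₀ i + e * Polynomial.C (u i) with hγ
  have hγ0 : (fun i => Polynomial.eval 0 (γ i)) = v := by
    funext i; simp [hγ, hγ₀, he]
  have hPγ : Polynomial.X ^ (k + 3) ∣ aeval γ P := by
    obtain ⟨r, hr⟩ := taylor_one γ₀ (fun i => Polynomial.C (u i)) e P
    rw [hγ, hr, hfac]
    have h1 : Polynomial.X ∣ h + Polynomial.C s *
        ∑ i, aeval γ₀ (pderiv i P) * Polynomial.C (u i) := by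
      rw [Polynomial.X_dvd_iff, Polynomial.coeff_zero_eq_eval_zero, Polynomial.eval_add,
        Polynomial.eval_mul, Polynomial.eval_finsetSum]
      simp only [Polynomial.eval_mul, Polynomial.eval_C, ev0, hγ₀0]
      exact hs
    obtain ⟨q, hq⟩ := h1
    refine ⟨q + Polynomial.C s ^ 2 * Polynomial.X ^ (k + 1) * r, ?_⟩
    rw [he]
    linear_combination Polynomial.X ^ (k + 2) * hq
  have hFγ : Polynomial.X ^ (k + 3) ∣ aeval γ F := by
    rw [hFP, map_mul]; exact Dvd.dvd.mul_right hPγ _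
  have hHγ : Polynomial.X ^ (k + 3) ∣ aeval γ (hessPoly F) :=
    hPγ.trans (map_dvd (aeval γ) hPH)
  set U : Fin 3 → Polynomial ℂ := fun i => Polynomial.C (u i) with hU
  have hnU : Polynomial.eval 0 (∑ i, aeval γ (pderiv i F) * U i) = 1 := by
    rw [Polynomial.eval_finsetSum, ← hlu]
    apply Finset.sum_congr rfl
    intro i _
    rw [Polynomial.eval_mul, ev0, hγ0, hl]
    simp [hU]
  have hXn : ∀ f : Polynomial ℂ, Polynomial.eval 0 f ≠ 0 → ¬ Polynomial.X ∣ f := by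
    intro f hf
    rwa [Polynomial.X_dvd_iff, Polynomial.coeff_zero_eq_eval_zero]
  have hfin := second_order hd hF γ U _ _ k (fun i => rfl) (fun i => rfl) hFγ hHγ hnU
  have hyy : ∀ i, Polynomial.derivative (Polynomial.derivative (γ i)) =
      Polynomial.X ^ k * (Polynomial.C (s * ((k + 2) * (k + 1))) * U i) := by
    intro i
    simp only [hγ, hγ₀, he, hU]
    simp [Polynomial.derivative_X_pow]
    rw [show (Polynomial.C (2 : ℂ)) = 2 from rfl]
    ring
  have hfin2 : Polynomial.X ^ k * Polynomial.X ∣ Polynomial.X ^ k *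
      (Polynomial.C (s * ((k + 2) * (k + 1))) * ∑ i, aeval γ (pderiv i F) * U i) := by
    rw [← pow_succ]
    convert hfin using 1
    simp only [hyy, Finset.mul_sum]
    apply Finset.sum_congr rfl
    intro i _
    ring
  have hfin3 := (mul_dvd_mul_iff_left (pow_ne_zero k Polynomial.X_ne_zero)).mp hfin2
  refine hXn _ ?_ hfin3
  rw [Polynomial.eval_mul, hnU, Polynomial.eval_C, mul_one]
  have h1 : ((k : ℂ) + 2) ≠ 0 := by exact_mod_cast (by omega : k + 2 ≠ 0)
  have h2 : ((k : ℂ) + 1) ≠ 0 := by exact_mod_cast (by omega : k + 1 ≠ 0)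
  exact mul_ne_zero hs0 (mul_ne_zero h1 h2)

lemma relPrime_hess (d : ℕ) (hd : 2 ≤ d) (F : MvPolynomial (Fin 3) ℂ)
    (hF : F.IsHomogeneous d)
    (hsm : ∀ v : Fin 3 → ℂ, v ≠ 0 → aeval v F = 0 → ∃ i, aeval v (pderiv i F) ≠ 0)
    (hF0 : F ≠ 0)
    (hline : ¬ ∃ L : MvPolynomial (Fin 3) ℂ, L.IsHomogeneous 1 ∧ L ∣ F) :
    IsRelPrime F (hessPoly F) := by
  apply WfDvdMonoid.isRelPrime_of_no_irreducible_factors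
  · exact fun h => hF0 h.1
  intro P hP hPF hPH
  apply hline
  obtain ⟨Q, hQ⟩ := hPF
  obtain ⟨v, hv0, hPv⟩ := exists_zero hP
  have hFv : aeval v F = 0 := by rw [hQ, map_mul, hPv, zero_mul]
  obtain ⟨j, hj⟩ := hsm v hv0 hFv
  obtain ⟨j', hj'⟩ := Function.ne_iff.mp hv0
  set l : Fin 3 → ℂ := fun i => aeval v (pderiv i F) with hl
  let u : Fin 3 → ℂ := Pi.single j (l j)⁻¹
  let c : Fin 3 → ℂ := Pi.single j' (v j')⁻¹
  have hlu : ∑ i, l i * u i = 1 := by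
    simp [u, Pi.single_apply]
    exact mul_inv_cancel₀ hj
  have hcv : ∑ i, c i * v i = 1 := by
    simp [c, Pi.single_apply]
    exact inv_mul_cancel₀ hj'
  have hlv : ∑ i, l i * v i = 0 := by
    have := euler_aeval hF v
    rw [hFv, mul_zero] at this
    rw [← this]
    exact Finset.sum_congr rfl fun i _ => mul_comm _ _
  let w : Fin 3 → ℂ := ![l 1 * c 2 - l 2 * c 1, l 2 * c 0 - l 0 * c 2, l 0 * c 1 - l 1 * c 0]
  have hlw : ∑ i, l i * w i = 0 := by
    simp only [Fin.sum_univ_three, w, Matrix.cons_val_zero, Matrix.cons_val_one, Matrix.cons_val]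
    ring
  have key := core_local hd hF hQ hPH l u v w hPv (fun i => rfl) hlu hlw
  refine linear_dvd hF l u v w c hlu hcv hlv rfl ?_
  intro t
  have k2 := congrArg (Polynomial.aeval t) key
  rw [← AlgHom.comp_apply, MvPolynomial.comp_aeval, map_zero] at k2
  rw [hQ, map_mul]
  convert zero_mul _
  convert k2 using 3
  funext i
  simp only [map_add, map_mul, Polynomial.aeval_C, Polynomial.aeval_X]
  rfl

lemma hc_mul {d : ℕ} {F : MvPolynomial (Fin 3) ℂ} (hF : F.IsHomogeneous d)
    (a : MvPolynomial (Fin 3) ℂ) (n : ℕ) :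
    homogeneousComponent (n + d) (a * F) = homogeneousComponent n a * F := by
  let _ := MvPolynomial.gradedAlgebra (σ := Fin 3) (R := ℂ)
  have h := DirectSum.coe_decompose_mul_of_right_mem_of_le
    (𝒜 := homogeneousSubmodule (Fin 3) ℂ) (a := a) (b := F) (n := n + d) (i := d) hF (by omega)
  rw [Nat.add_sub_cancel] at h
  have e : ∀ (p : MvPolynomial (Fin 3) ℂ) k, homogeneousComponent k p =
    (DirectSum.decompose (homogeneousSubmodule (Fin 3) ℂ) p k : MvPolynomial (Fin 3) ℂ) :=
    fun p k => (MvPolynomial.decomposition.decompose'_apply p k).symm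
  rw [e, e, h]

lemma hc_mul_lt {d : ℕ} {F : MvPolynomial (Fin 3) ℂ} (hF : F.IsHomogeneous d)
    (a : MvPolynomial (Fin 3) ℂ) (n : ℕ) (hn : n < d) :
    homogeneousComponent n (a * F) = 0 := by
  let _ := MvPolynomial.gradedAlgebra (σ := Fin 3) (R := ℂ)
  have h := DirectSum.coe_decompose_mul_of_right_mem_of_not_le
    (𝒜 := homogeneousSubmodule (Fin 3) ℂ) (a := a) (b := F) (n := n) (i := d) hF (by omega)
  have e : ∀ (p : MvPolynomial (Fin 3) ℂ) k, homogeneousComponent k p =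
    (DirectSum.decompose (homogeneousSubmodule (Fin 3) ℂ) p k : MvPolynomial (Fin 3) ℂ) :=
    fun p k => (MvPolynomial.decomposition.decompose'_apply p k).symm
  rw [e, h]

/-- the graded pieces -/
abbrev SS (n : ℕ) : Submodule ℂ (MvPolynomial (Fin 3) ℂ) := homogeneousSubmodule (Fin 3) ℂ n

instance (n : ℕ) : FiniteDimensional ℂ (SS n) :=
  Module.Finite.iff_fg.mpr (homogeneousSubmodule_fg (σ := Fin 3) (R := ℂ) n)

lemma finrank_SS (n : ℕ) : Module.finrank ℂ (SS n) = (n + 2).choose 2 := by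
  have h : SS n = AddMonoidAlgebra.supported _ ℂ {d : Fin 3 →₀ ℕ | d.degree = n} :=
    homogeneousSubmodule_eq_finsupp_supported (Fin 3) ℂ n
  have hs : {d : Fin 3 →₀ ℕ | d.degree = n} =
      ((Finset.univ : Finset (Fin 3)).finsuppAntidiag n : Set (Fin 3 →₀ ℕ)) := by
    ext x
    simp [Finsupp.degree_eq_sum]
  rw [h, hs, (AddMonoidAlgebra.supportedEquivFinsupp _).finrank_eq, Module.finrank_finsupp_self]
  simp only [Finset.coe_sort_coe, Fintype.card_coe]
  rw [Finset.card_finsuppAntidiag_nat_eq_choose]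
  simp only [Finset.card_univ, Fintype.card_fin]
  rw [show 3 + n - 1 = n + 2 by omega, Nat.choose_symm_add]

lemma choose_two (n : ℕ) : 2 * (n + 2).choose 2 = (n + 2) * (n + 1) := by
  have := Nat.triangle_succ (n + 1)
  rw [Nat.choose_two_right]
  simp only [Nat.add_sub_cancel] at *
  exact Nat.mul_div_cancel' (by
    rw [mul_comm]; exact (Nat.even_mul_succ_self (n+1)).two_dvd)

/-- degree `n` part of the ideal `(F, G)` -/
abbrev II (F G : MvPolynomial (Fin 3) ℂ) (n : ℕ) : Submodule ℂ (MvPolynomial (Fin 3) ℂ) :=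
  SS n ⊓ (Ideal.span {F, G}).restrictScalars ℂ

lemma II_eq {d e : ℕ} {F G : MvPolynomial (Fin 3) ℂ} (hF : F.IsHomogeneous d)
    (hG : G.IsHomogeneous e) (N : ℕ) :
    II F G (N + d + e) = (SS (N + e)).map (LinearMap.mulRight ℂ F) ⊔
      (SS (N + d)).map (LinearMap.mulRight ℂ G) := by
  apply le_antisymm
  · rintro f ⟨hf, hI⟩
    obtain ⟨a, b, hab⟩ := Ideal.mem_span_pair.mp hI
    have : f = homogeneousComponent (N + e) a * F + homogeneousComponent (N + d) b * G := by
      rw [← hc_mul hF, ← hc_mul hG, show N + e + d = N + d + e by ring, ← map_add, hab]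
      exact (homogeneousComponent_eq_self hf).symm
    rw [this]
    exact Submodule.add_mem_sup ⟨_, homogeneousComponent_mem _ _, rfl⟩
      ⟨_, homogeneousComponent_mem _ _, rfl⟩
  · apply sup_le
    · rintro _ ⟨a, ha, rfl⟩
      refine ⟨?_, ?_⟩
      · have := IsHomogeneous.mul ha hF
        rw [show N + e + d = N + d + e by ring] at this
        exact this
      · exact Ideal.mul_mem_left _ _ (Ideal.subset_span (by simp))
    · rintro _ ⟨a, ha, rfl⟩
      refine ⟨?_, ?_⟩
      · exact IsHomogeneous.mul ha hG
      · exact Ideal.mul_mem_left _ _ (Ideal.subset_span (by simp))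

lemma inf_eq {d e : ℕ} {F G : MvPolynomial (Fin 3) ℂ} (hF : F.IsHomogeneous d)
    (hG : G.IsHomogeneous e) (hrel : IsRelPrime F G) (N : ℕ) :
    (SS (N + e)).map (LinearMap.mulRight ℂ F) ⊓
      (SS (N + d)).map (LinearMap.mulRight ℂ G) = (SS N).map (LinearMap.mulRight ℂ (F * G)) := by
  apply le_antisymm
  · rintro f ⟨⟨a, ha, rfl⟩, ⟨b, hb, hab⟩⟩
    simp only [LinearMap.mulRight_apply] at hab
    have h1 : G ∣ a * F := ⟨b, by rw [← hab, mul_comm]⟩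
    obtain ⟨c, hc⟩ := hrel.symm.dvd_of_dvd_mul_right h1
    refine ⟨homogeneousComponent N c, homogeneousComponent_mem _ _, ?_⟩
    have : a = homogeneousComponent N c * G := by
      rw [← hc_mul hG, mul_comm c, ← hc]
      exact (homogeneousComponent_eq_self ha).symm
    simp only [LinearMap.mulRight_apply]
    linear_combination (-F) * this
  · rintro _ ⟨c, hc, rfl⟩
    refine ⟨⟨c * G, IsHomogeneous.mul hc hG, ?_⟩, ⟨c * F, IsHomogeneous.mul hc hF, ?_⟩⟩
    · simp only [LinearMap.mulRight_apply]; ring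
    · simp only [LinearMap.mulRight_apply]; ring

lemma finrank_mulRight (n : ℕ) {F : MvPolynomial (Fin 3) ℂ} (hF : F ≠ 0) :
    Module.finrank ℂ ((SS n).map (LinearMap.mulRight ℂ F)) = (n + 2).choose 2 := by
  rw [← finrank_SS]
  exact (Submodule.equivMapOfInjective _ (mul_left_injective₀ hF) _).finrank_eq.symm

lemma hilbert {d e : ℕ} {F G : MvPolynomial (Fin 3) ℂ} (hF : F.IsHomogeneous d)
    (hG : G.IsHomogeneous e) (hF0 : F ≠ 0) (hG0 : G ≠ 0) (hrel : IsRelPrime F G) (n : ℕ)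
    (hn : d + e ≤ n) :
    Module.finrank ℂ (SS n) = Module.finrank ℂ (II F G n) + d * e := by
  obtain ⟨N, rfl⟩ := Nat.exists_eq_add_of_le hn
  rw [show d + e + N = N + d + e by ring]
  have h := Submodule.finrank_sup_add_finrank_inf_eq ((SS (N + e)).map (LinearMap.mulRight ℂ F))
    ((SS (N + d)).map (LinearMap.mulRight ℂ G))
  rw [← II_eq hF hG, inf_eq hF hG hrel, finrank_mulRight _ hF0, finrank_mulRight _ hG0,
    finrank_mulRight _ (mul_ne_zero hF0 hG0)] at h
  rw [finrank_SS]
  have h1 := choose_two (N + d + e)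
  have h2 := choose_two (N + d)
  have h3 := choose_two (N + e)
  have h4 := choose_two N
  nlinarith

/-- the coordinate ring of the affine part `ℓ ≠ 0` of the intersection -/
abbrev JJ (F G l : MvPolynomial (Fin 3) ℂ) : Ideal (MvPolynomial (Fin 3) ℂ) :=
  Ideal.span {F, G, l - 1}

abbrev AA (F G l : MvPolynomial (Fin 3) ℂ) : Type := MvPolynomial (Fin 3) ℂ ⧸ JJ F G l

lemma mk_l (F G l : MvPolynomial (Fin 3) ℂ) : Ideal.Quotient.mk (JJ F G l) l = 1 := by
  rw [← map_one (Ideal.Quotient.mk (JJ F G l)), Ideal.Quotient.eq]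
  exact Ideal.subset_span (by simp)

/-- quotient map as linear map -/
abbrev qq (F G l : MvPolynomial (Fin 3) ℂ) : MvPolynomial (Fin 3) ℂ →ₗ[ℂ] AA F G l :=
  (Ideal.Quotient.mkₐ ℂ (JJ F G l)).toLinearMap

lemma mem_map_of_le (F G : MvPolynomial (Fin 3) ℂ) {l : MvPolynomial (Fin 3) ℂ}
    (hl : l.IsHomogeneous 1) (f : MvPolynomial (Fin 3) ℂ) (n : ℕ) (hn : f.totalDegree ≤ n) :
    qq F G l f ∈ (SS n).map (qq F G l) := by
  refine ⟨∑ k ∈ Finset.range (f.totalDegree + 1), l ^ (n - k) * homogeneousComponent k f, ?_, ?_⟩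
  · apply Submodule.sum_mem
    intro k hk
    have hk' : k ≤ n := by have := Finset.mem_range.mp hk; omega
    have := (hl.pow (n - k)).mul (homogeneousComponent_isHomogeneous k f)
    rw [show 1 * (n - k) + k = n by omega] at this
    exact this
  · conv_rhs => rw [← sum_homogeneousComponent f]
    rw [map_sum, map_sum]
    apply Finset.sum_congr rfl
    intro k _
    simp only [AlgHom.toLinearMap_apply, Ideal.Quotient.mkₐ_eq_mk, map_mul, map_pow, mk_l, one_pow,
      one_mul]

lemma finrank_map_add {V W : Type*} [AddCommGroup V] [Module ℂ V] [AddCommGroup W] [Module ℂ W]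
    (q : V →ₗ[ℂ] W) (S : Submodule ℂ V) [FiniteDimensional ℂ S] :
    Module.finrank ℂ (S.map q) + Module.finrank ℂ (S ⊓ LinearMap.ker q : Submodule ℂ V) =
      Module.finrank ℂ S := by
  have h := LinearMap.finrank_range_add_finrank_ker (q.domRestrict S)
  rw [LinearMap.range_domRestrict] at h
  rw [← h]
  congr 1
  have h2 : (S ⊓ LinearMap.ker q) = (LinearMap.ker (q.domRestrict S)).map S.subtype := by
    rw [LinearMap.ker_domRestrict, Submodule.map_comap_subtype]
  rw [h2]
  exact (Submodule.equivMapOfInjective _ S.injective_subtype _).finrank_eq.symm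

lemma JJ_ge (F G l : MvPolynomial (Fin 3) ℂ) : Ideal.span {F, G} ≤ JJ F G l :=
  Ideal.span_mono (by intro x; simp; tauto)

lemma finrank_map_le {d e : ℕ} {F G l : MvPolynomial (Fin 3) ℂ} (hF : F.IsHomogeneous d)
    (hG : G.IsHomogeneous e) (hF0 : F ≠ 0) (hG0 : G ≠ 0) (hrel : IsRelPrime F G) (n : ℕ)
    (hn : d + e ≤ n) : Module.finrank ℂ ((SS n).map (qq F G l)) ≤ d * e := by
  have h1 := hilbert hF hG hF0 hG0 hrel n hn
  have h2 := finrank_map_add (qq F G l) (SS n)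
  have h3 : Module.finrank ℂ (II F G n) ≤
      Module.finrank ℂ (SS n ⊓ LinearMap.ker (qq F G l) : Submodule ℂ _) := by
    have : FiniteDimensional ℂ (SS n ⊓ LinearMap.ker (qq F G l) : Submodule ℂ _) :=
      Submodule.finiteDimensional_of_le inf_le_left
    apply Submodule.finrank_mono
    apply inf_le_inf_left
    intro f hf
    exact Ideal.Quotient.eq_zero_iff_mem.mpr (JJ_ge F G l hf)
  omega

lemma rank_AA_le {d e : ℕ} {F G l : MvPolynomial (Fin 3) ℂ} (hF : F.IsHomogeneous d)
    (hG : G.IsHomogeneous e) (hl : l.IsHomogeneous 1)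
    (hF0 : F ≠ 0) (hG0 : G ≠ 0) (hrel : IsRelPrime F G) :
    Module.rank ℂ (AA F G l) ≤ (d * e : ℕ) := by
  apply rank_le
  intro s hs
  have hsurj : Function.Surjective (qq F G l) := Ideal.Quotient.mk_surjective
  choose r hr using hsurj
  let n := max (d + e) (s.sup fun a => (r a).totalDegree)
  have hsub : Submodule.span ℂ (s : Set (AA F G l)) ≤ (SS n).map (qq F G l) := by
    rw [Submodule.span_le]
    intro a ha
    rw [← hr a]
    apply mem_map_of_le F G hl
    exact le_trans (Finset.le_sup (f := fun a => (r a).totalDegree) ha) (le_max_right _ _)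
  rw [← finrank_span_finset_eq_card hs]
  exact (Submodule.finrank_mono hsub).trans
    (finrank_map_le hF hG hF0 hG0 hrel n (le_max_left _ _))

lemma finite_AA {d e : ℕ} {F G l : MvPolynomial (Fin 3) ℂ} (hF : F.IsHomogeneous d)
    (hG : G.IsHomogeneous e) (hl : l.IsHomogeneous 1)
    (hF0 : F ≠ 0) (hG0 : G ≠ 0) (hrel : IsRelPrime F G) :
    FiniteDimensional ℂ (AA F G l) :=
  Module.rank_lt_aleph0_iff.mp
    ((rank_AA_le hF hG hl hF0 hG0 hrel).trans_lt (Cardinal.natCast_lt_aleph0))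

/-- in large degree everything is in `(F,G,l)` -/
lemma large_degree {F G l : MvPolynomial (Fin 3) ℂ}
    (hz : ∀ v : Fin 3 → ℂ, aeval v F = 0 → aeval v G = 0 → aeval v l = 0 → v = 0) :
    ∃ N, ∀ n ≥ N, ∀ f ∈ SS n, f ∈ Ideal.span {F, G, l} := by
  have h1 : ∀ i, ∃ k, (X i : MvPolynomial (Fin 3) ℂ) ^ k ∈ Ideal.span {F, G, l} := by
    intro i
    have : (X i : MvPolynomial (Fin 3) ℂ) ∈ (Ideal.span {F, G, l}).radical := by
      rw [← MvPolynomial.vanishingIdeal_zeroLocus_eq_radical (K := ℂ)]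
      rw [MvPolynomial.mem_vanishingIdeal_iff]
      intro x hx
      rw [MvPolynomial.mem_zeroLocus_iff] at hx
      have : x = 0 := hz x (hx F (Ideal.subset_span (by simp))) (hx G (Ideal.subset_span (by simp)))
        (hx l (Ideal.subset_span (by simp)))
      simp [this]
    exact this
  choose k hk using h1
  refine ⟨k 0 + k 1 + k 2, ?_⟩
  intro n hn f hf
  rw [MvPolynomial.as_sum f]
  apply Ideal.sum_mem
  intro m hm
  have hdeg : m 0 + m 1 + m 2 = n := by
    have := hf (MvPolynomial.mem_support_iff.mp hm)
    rw [← this, Finsupp.weight_apply, Finsupp.sum_fintype _ _ (by simp)]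
    simp [Fin.sum_univ_three]
  obtain ⟨i, hi⟩ : ∃ i, k i ≤ m i := by
    by_contra! h
    have := h 0
    have := h 1
    have := h 2
    omega
  have : (X i : MvPolynomial (Fin 3) ℂ) ^ k i ∣ monomial m (coeff m f) := by
    rw [MvPolynomial.X_pow_eq_monomial, MvPolynomial.monomial_dvd_monomial]
    refine ⟨Or.inr ?_, one_dvd _⟩
    simpa using hi
  exact Ideal.mem_of_dvd _ this (hk i)

lemma hc_mem_span {d e : ℕ} {F G : MvPolynomial (Fin 3) ℂ} (hF : F.IsHomogeneous d)
    (hG : G.IsHomogeneous e) {f : MvPolynomial (Fin 3) ℂ} (hf : f ∈ Ideal.span {F, G}) (n : ℕ) :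
    homogeneousComponent n f ∈ Ideal.span {F, G} := by
  obtain ⟨a, b, rfl⟩ := Ideal.mem_span_pair.mp hf
  rw [map_add]
  apply Ideal.add_mem
  · rcases lt_or_ge n d with h | h
    · rw [hc_mul_lt hF _ _ h]; exact Ideal.zero_mem _
    · obtain ⟨k, rfl⟩ := Nat.exists_eq_add_of_le h
      rw [add_comm, hc_mul hF]
      exact Ideal.mul_mem_left _ _ (Ideal.subset_span (by simp))
  · rcases lt_or_ge n e with h | h
    · rw [hc_mul_lt hG _ _ h]; exact Ideal.zero_mem _
    · obtain ⟨k, rfl⟩ := Nat.exists_eq_add_of_le h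
      rw [add_comm, hc_mul hG]
      exact Ideal.mul_mem_left _ _ (Ideal.subset_span (by simp))

/-- multiplication by `l` is injective on `S/(F,G)` in large degrees -/
lemma mul_l_inj {d e : ℕ} {F G l : MvPolynomial (Fin 3) ℂ} (hF : F.IsHomogeneous d)
    (hG : G.IsHomogeneous e) (hl : l.IsHomogeneous 1)
    (hF0 : F ≠ 0) (hG0 : G ≠ 0) (hrel : IsRelPrime F G)
    (hz : ∀ v : Fin 3 → ℂ, aeval v F = 0 → aeval v G = 0 → aeval v l = 0 → v = 0) :
    ∃ N, d + e ≤ N ∧ ∀ n ≥ N, ∀ f ∈ SS n, f * l ∈ Ideal.span {F, G} → f ∈ Ideal.span {F, G} := by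
  obtain ⟨N, hN⟩ := large_degree hz
  refine ⟨N + d + e, by omega, ?_⟩
  intro n hn f hf hfl
  -- the map S_n → S/(F,G), multiplication by l
  let r : MvPolynomial (Fin 3) ℂ →ₗ[ℂ] (MvPolynomial (Fin 3) ℂ ⧸ Ideal.span {F, G}) :=
    (Ideal.Quotient.mkₐ ℂ (Ideal.span {F, G})).toLinearMap
  have hker : LinearMap.ker r = (Ideal.span {F, G}).restrictScalars ℂ := by
    ext x
    exact Ideal.Quotient.eq_zero_iff_mem
  have h1 := finrank_map_add r (SS n)
  have h2 := finrank_map_add r (SS (n + 1))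
  have h3 := finrank_map_add (r.comp (LinearMap.mulRight ℂ l)) (SS n)
  have e1 := hilbert hF hG hF0 hG0 hrel n (by omega)
  have e2 := hilbert hF hG hF0 hG0 hrel (n + 1) (by omega)
  rw [hker] at h1 h2
  simp only [II] at e1 e2
  have h4 : (SS (n + 1)).map r ≤ (SS n).map (r.comp (LinearMap.mulRight ℂ l)) := by
    rintro _ ⟨g, hg, rfl⟩
    have hg' := hN (n + 1) (by omega) g hg
    obtain ⟨a, b, hab, hg2⟩ := Submodule.mem_span_insert.mp hg'
    obtain ⟨a', c, hac⟩ := Ideal.mem_span_pair.mp hab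
    refine ⟨homogeneousComponent n c, homogeneousComponent_mem _ _, ?_⟩
    simp only [LinearMap.comp_apply, LinearMap.mulRight_apply]
    rw [← hc_mul hl]
    apply Ideal.Quotient.eq.mpr
    have : homogeneousComponent (n + 1) (c * l) - g =
        - homogeneousComponent (n + 1) (a * F + a' * G) := by
      have : g = homogeneousComponent (n + 1) g := (homogeneousComponent_eq_self hg).symm
      rw [this, hg2, ← hac, smul_eq_mul]
      simp only [map_add]
      ring
    rw [this]
    refine neg_mem ?_
    apply hc_mem_span hF hG
    exact Ideal.mem_span_pair.mpr ⟨_, _, rfl⟩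
  have h5 := Submodule.finrank_mono h4
  have h6 : II F G n ≤ SS n ⊓ LinearMap.ker (r.comp (LinearMap.mulRight ℂ l)) := by
    rintro x ⟨hx, hx2⟩
    refine ⟨hx, ?_⟩
    exact Ideal.Quotient.eq_zero_iff_mem.mpr (Ideal.mul_mem_right _ _ hx2)
  have fd : FiniteDimensional ℂ (SS n ⊓ LinearMap.ker (r.comp (LinearMap.mulRight ℂ l)) :
      Submodule ℂ _) := Submodule.finiteDimensional_of_le inf_le_left
  have h7 := Submodule.eq_of_le_of_finrank_le h6 (by
    change Module.finrank ℂ (SS n ⊓ LinearMap.ker (r.comp (LinearMap.mulRight ℂ l)) :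
      Submodule ℂ _) ≤ Module.finrank ℂ (SS n ⊓ (Ideal.span {F, G}).restrictScalars ℂ :
      Submodule ℂ _)
    omega)
  have : f ∈ II F G n := by
    rw [h7]
    exact ⟨hf, Ideal.Quotient.eq_zero_iff_mem.mpr hfl⟩
  exact this.2

lemma finrank_AA {d e : ℕ} {F G l : MvPolynomial (Fin 3) ℂ} (hF : F.IsHomogeneous d)
    (hG : G.IsHomogeneous e) (hl : l.IsHomogeneous 1)
    (hF0 : F ≠ 0) (hG0 : G ≠ 0) (hrel : IsRelPrime F G)
    (hz : ∀ v : Fin 3 → ℂ, aeval v F = 0 → aeval v G = 0 → aeval v l = 0 → v = 0) :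
    Module.finrank ℂ (AA F G l) = d * e := by
  have hfin := finite_AA hF hG hl hF0 hG0 hrel
  apply le_antisymm
  · have := rank_AA_le hF hG hl hF0 hG0 hrel
    rw [← Module.finrank_eq_rank] at this
    exact_mod_cast this
  obtain ⟨N, hde, hN⟩ := mul_l_inj hF hG hl hF0 hG0 hrel hz
  have h1 := hilbert hF hG hF0 hG0 hrel N hde
  have h2 := finrank_map_add (qq F G l) (SS N)
  have h3 : SS N ⊓ LinearMap.ker (qq F G l) ≤ II F G N := by
    rintro f ⟨hf, hf2⟩
    refine ⟨hf, ?_⟩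
    have hf3 : f ∈ JJ F G l := Ideal.Quotient.eq_zero_iff_mem.mp hf2
    obtain ⟨a, b, hab, hg2⟩ := Submodule.mem_span_insert.mp hf3
    obtain ⟨a', c, hac⟩ := Ideal.mem_span_pair.mp hab
    set I := Ideal.span {F, G} with hI
    have hI1 : f - c * (l - 1) ∈ I := by
      refine Ideal.mem_span_pair.mpr ⟨a, a', ?_⟩
      rw [hg2, ← hac, smul_eq_mul]; ring
    -- components
    have hz0 : homogeneousComponent 0 (f + c) - homogeneousComponent 0 (c * l) ∈ I := by
      have := hc_mem_span hF hG hI1 0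
      convert this using 1
      rw [← map_sub]; congr 1; ring
    have hzs : ∀ k, homogeneousComponent (k + 1) f + homogeneousComponent (k + 1) c
        - homogeneousComponent k c * l ∈ I := by
      intro k
      have := hc_mem_span hF hG hI1 (k + 1)
      rw [← hc_mul hl]
      convert this using 1
      rw [← map_add, ← map_sub]; congr 1; ring
    have hfc : ∀ k, k ≠ N → homogeneousComponent k f = 0 := by
      intro k hk
      rw [homogeneousComponent_of_mem hf, if_neg hk]
    have hlow : ∀ k, k < N → homogeneousComponent k c ∈ I := by
      intro k
      induction k with
      | zero =>
        intro h
        rw [map_add, hfc 0 (by omega), hc_mul_lt hl _ _ (by omega), zero_add, sub_zero] at hz0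
        exact hz0
      | succ k ih =>
        intro h
        have := hzs k
        rw [hfc _ (by omega), zero_add] at this
        exact (Submodule.sub_mem_iff_left _ (Ideal.mul_mem_right _ _ (ih (by omega)))).mp this
    have hNc : f + homogeneousComponent N c ∈ I := by
      rcases hNN : N with _ | k
      · rw [hNN] at hf
        rw [map_add, hc_mul_lt hl _ _ (by omega), sub_zero, homogeneousComponent_eq_self hf] at hz0
        exact hz0
      · rw [hNN] at hf
        have := hzs k
        rw [homogeneousComponent_eq_self hf] at this
        exact (Submodule.sub_mem_iff_left _ (Ideal.mul_mem_right _ _ (hlow k (by omega)))).mp this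
    have hhigh : ∀ j, homogeneousComponent (N + j) c ∈ I → homogeneousComponent N c ∈ I := by
      intro j
      induction j with
      | zero => exact id
      | succ j ih =>
        intro h
        apply ih
        apply hN (N + j) (by omega) _ (homogeneousComponent_mem _ _)
        have := hzs (N + j)
        rw [hfc _ (by omega), zero_add] at this
        exact (Submodule.sub_mem_iff_right _ h).mp this
    have hcN := hhigh (c.totalDegree + 1) (by
      rw [homogeneousComponent_eq_zero _ _ (by omega)]; exact Ideal.zero_mem _)
    exact (Ideal.add_mem_iff_left _ hcN).mp hNc
  have fd : FiniteDimensional ℂ (II F G N) := Submodule.finiteDimensional_of_le inf_le_left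
  have h4 := Submodule.finrank_mono h3
  have h5 := Submodule.finrank_le ((SS N).map (qq F G l))
  change Module.finrank ℂ (SS N ⊓ LinearMap.ker (qq F G l) : Submodule ℂ _) ≤
    Module.finrank ℂ (II F G N) at h4
  omega

/-- The local ring of the plane `l = 1` at `v`, modulo `F, G`. -/
def BB (F G l : MvPolynomial (Fin 3) ℂ) (v : Fin 3 → ℂ) : Type :=
  Localization (nonvanishing v) ⧸
      Ideal.span {algebraMap (MvPolynomial (Fin 3) ℂ) (Localization (nonvanishing v)) F,
        algebraMap (MvPolynomial (Fin 3) ℂ) (Localization (nonvanishing v)) G,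
        algebraMap (MvPolynomial (Fin 3) ℂ) (Localization (nonvanishing v)) (l - 1)}

instance (F G l : MvPolynomial (Fin 3) ℂ) (v : Fin 3 → ℂ) : CommRing (BB F G l v) :=
  inferInstanceAs (CommRing (_ ⧸ _))

instance (F G l : MvPolynomial (Fin 3) ℂ) (v : Fin 3 → ℂ) : Algebra ℂ (BB F G l v) :=
  inferInstanceAs (Algebra ℂ (Localization (nonvanishing v) ⧸ _))

/-- The quotient map. -/
def quB (F G l : MvPolynomial (Fin 3) ℂ) (v : Fin 3 → ℂ) :
    Localization (nonvanishing v) →ₐ[ℂ] BB F G l v :=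
  Ideal.Quotient.mkₐ ℂ (Ideal.span {algebraMap (MvPolynomial (Fin 3) ℂ) (Localization (nonvanishing v)) F,
        algebraMap (MvPolynomial (Fin 3) ℂ) _ G, algebraMap (MvPolynomial (Fin 3) ℂ) _ (l - 1)})

/-- The canonical map from polynomials. -/
def toB (F G l : MvPolynomial (Fin 3) ℂ) (v : Fin 3 → ℂ) :
    MvPolynomial (Fin 3) ℂ →ₐ[ℂ] BB F G l v :=
  (quB F G l v).comp
    (IsScalarTower.toAlgHom ℂ (MvPolynomial (Fin 3) ℂ) (Localization (nonvanishing v)))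

lemma toB_F (F G l : MvPolynomial (Fin 3) ℂ) (v : Fin 3 → ℂ) : toB F G l v F = 0 :=
  Ideal.Quotient.eq_zero_iff_mem.mpr (Ideal.subset_span (by simp))

lemma toB_G (F G l : MvPolynomial (Fin 3) ℂ) (v : Fin 3 → ℂ) : toB F G l v G = 0 :=
  Ideal.Quotient.eq_zero_iff_mem.mpr (Ideal.subset_span (by simp))

lemma toB_l (F G l : MvPolynomial (Fin 3) ℂ) (v : Fin 3 → ℂ) : toB F G l v l = 1 := by
  have : toB F G l v (l - 1) = 0 :=
    Ideal.Quotient.eq_zero_iff_mem.mpr (Ideal.subset_span (by simp))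
  rw [map_sub, map_one, sub_eq_zero] at this
  exact this

lemma toB_unit (F G l : MvPolynomial (Fin 3) ℂ) (v : Fin 3 → ℂ) (f : MvPolynomial (Fin 3) ℂ)
    (hf : aeval v f ≠ 0) : IsUnit (toB F G l v f) := by
  have : IsUnit (algebraMap _ (Localization (nonvanishing v)) f) :=
    IsLocalization.map_units _ (⟨f, hf⟩ : nonvanishing v)
  exact this.map (quB F G l v)

lemma toB_eq (F G l : MvPolynomial (Fin 3) ℂ) (v : Fin 3 → ℂ) (f : MvPolynomial (Fin 3) ℂ) :
    toB F G l v f = aeval (fun j => toB F G l v (X j)) f := by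
  have := aeval_unique (toB F G l v)
  conv_lhs => rw [this]
  rfl

lemma BB_subsingleton (F G l : MvPolynomial (Fin 3) ℂ) (v : Fin 3 → ℂ)
    (h : aeval v F ≠ 0 ∨ aeval v G ≠ 0) : Module.finrank ℂ (BB F G l v) = 0 := by
  have : IsUnit (0 : BB F G l v) := by
    rcases h with h | h
    · rw [← toB_F F G l v]; exact toB_unit _ _ _ _ _ h
    · rw [← toB_G F G l v]; exact toB_unit _ _ _ _ _ h
  have : Subsingleton (BB F G l v) := subsingleton_of_zero_eq_one (isUnit_zero_iff.mp this)
  exact Module.finrank_zero_of_subsingleton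

/-- Evaluation on the local ring. -/
lemma loc_ev (v : Fin 3 → ℂ) : ∃ ev : Localization (nonvanishing v) →ₐ[ℂ] ℂ,
    (∀ f, ev (algebraMap (MvPolynomial (Fin 3) ℂ) _ f) = aeval v f) ∧ ∀ b, ev b ≠ 0 → IsUnit b := by
  let ev : Localization (nonvanishing v) →ₐ[ℂ] ℂ :=
    IsLocalization.liftAlgHom (M := nonvanishing v) (f := (aeval v : MvPolynomial (Fin 3) ℂ →ₐ[ℂ] ℂ))
      (fun y => isUnit_iff_ne_zero.mpr y.2)
  have hev : ∀ f, ev (algebraMap (MvPolynomial (Fin 3) ℂ) _ f) = aeval v f := by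
    intro f
    simp [ev]
  refine ⟨ev, hev, ?_⟩
  intro b hb
  obtain ⟨f, s, rfl⟩ := IsLocalization.exists_mk'_eq (nonvanishing v) b
  have h1 := IsLocalization.mk'_spec (Localization (nonvanishing v)) f s
  have h2 : aeval v f ≠ 0 := by
    rw [← hev, ← h1, map_mul, hev]
    exact mul_ne_zero hb s.2
  have h3 : IsUnit (algebraMap _ (Localization (nonvanishing v)) f) :=
    IsLocalization.map_units _ (⟨f, h2⟩ : nonvanishing v)
  rw [← h1] at h3
  exact isUnit_of_mul_isUnit_left h3

lemma bb_hom {R : Type*} [CommRing R] [Algebra ℂ R] (F G l : MvPolynomial (Fin 3) ℂ)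
    (v : Fin 3 → ℂ) (a : Fin 3 → R)
    (hu : ∀ f : MvPolynomial (Fin 3) ℂ, aeval v f ≠ 0 → IsUnit (aeval a f))
    (hF : aeval a F = 0) (hG : aeval a G = 0) (hl : aeval a l = 1) :
    ∃ φ : BB F G l v →ₐ[ℂ] R, ∀ f, φ (toB F G l v f) = aeval a f := by
  let ev : Localization (nonvanishing v) →ₐ[ℂ] R :=
    IsLocalization.liftAlgHom (M := nonvanishing v) (f := (aeval a : MvPolynomial (Fin 3) ℂ →ₐ[ℂ] R)) (fun y => hu _ y.2)
  have hev : ∀ f, ev (algebraMap (MvPolynomial (Fin 3) ℂ) _ f) = aeval a f := by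
    intro f
    simp [ev]
  refine ⟨Ideal.Quotient.liftₐ _ ev ?_, ?_⟩
  · intro x hx
    have : Ideal.span {algebraMap (MvPolynomial (Fin 3) ℂ) (Localization (nonvanishing v)) F,
        algebraMap (MvPolynomial (Fin 3) ℂ) (Localization (nonvanishing v)) G,
        algebraMap (MvPolynomial (Fin 3) ℂ) (Localization (nonvanishing v)) (l - 1)} ≤
        RingHom.ker ev := by
      rw [Ideal.span_le]
      rintro y (rfl | rfl | rfl)
      · change ev _ = 0
        rw [hev, hF]
      · change ev _ = 0
        rw [hev, hG]
      · change ev _ = 0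
        rw [hev, map_sub, hl, map_one, sub_self]
    exact this hx
  · intro f
    exact hev f

lemma trans_hom {d e : ℕ} {F G l1 l2 : MvPolynomial (Fin 3) ℂ} (hF : F.IsHomogeneous d)
    (hG : G.IsHomogeneous e) (hl1 : l1.IsHomogeneous 1)
    (v1 v2 : Fin 3 → ℂ) (c : ℂ) (hc : c ≠ 0) (hv : v1 = fun j => c * v2 j)
    (h1 : aeval v1 l1 = 1) :
    ∃ φ : BB F G l1 v1 →ₐ[ℂ] BB F G l2 v2, ∃ u, u * toB F G l2 v2 l1 = 1 ∧
      ∀ f, φ (toB F G l1 v1 f) = aeval (fun j => u * toB F G l2 v2 (X j)) f := by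
  obtain ⟨ev, hev, hunit⟩ := loc_ev v2
  have h12 : c * aeval v2 l1 = 1 := by
    rw [hv, aeval_scale hl1, pow_one] at h1
    exact h1
  have h3 : IsUnit (algebraMap _ (Localization (nonvanishing v2)) l1) := by
    apply hunit
    rw [hev]
    exact right_ne_zero_of_mul_eq_one h12
  obtain ⟨u, hu⟩ := h3.exists_left_inv
  have hevu : ev u = c := by
    have := congrArg ev hu
    rw [map_mul, hev, map_one] at this
    exact mul_right_cancel₀ (right_ne_zero_of_mul_eq_one h12) (this.trans h12.symm)
  let q : Localization (nonvanishing v2) →ₐ[ℂ] BB F G l2 v2 := quB F G l2 v2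
  have hq : ∀ f, q (algebraMap _ _ f) = toB F G l2 v2 f := fun _ => rfl
  have hqu : q u * toB F G l2 v2 l1 = 1 := by
    rw [← hq, ← map_mul, hu, map_one]
  suffices h : ∃ φ : BB F G l1 v1 →ₐ[ℂ] BB F G l2 v2, ∀ f, φ (toB F G l1 v1 f) =
      aeval (fun j => q u * toB F G l2 v2 (X j)) f by
    obtain ⟨φ, hφ⟩ := h
    exact ⟨φ, q u, hqu, hφ⟩
  apply bb_hom F G l1 v1 (fun j => q u * toB F G l2 v2 (X j))
  · intro f hf
    have e1 : aeval (fun j => q u * toB F G l2 v2 (X j)) f =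
        q (aeval (fun j => u * algebraMap (MvPolynomial (Fin 3) ℂ)
          (Localization (nonvanishing v2)) (X j)) f) := by
      rw [comp_aeval_apply]
      simp only [map_mul, hq]
    rw [e1]
    apply IsUnit.map
    apply hunit
    rw [comp_aeval_apply]
    convert hf using 2
    rw [hv]
    congr 1
    funext j
    simp [hev, hevu]
  · rw [aeval_scale hF, ← toB_eq, toB_F, mul_zero]
  · rw [aeval_scale hG, ← toB_eq, toB_G, mul_zero]
  · rw [aeval_scale hl1, ← toB_eq, pow_one, hqu]

lemma BB_hom_ext {R : Type*} [CommRing R] [Algebra ℂ R] {F G l : MvPolynomial (Fin 3) ℂ}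
    {v : Fin 3 → ℂ} {φ ψ : BB F G l v →ₐ[ℂ] R}
    (h : ∀ j, φ (toB F G l v (X j)) = ψ (toB F G l v (X j))) : φ = ψ := by
  have : φ.comp (quB F G l v) = ψ.comp (quB F G l v) := ?_
  · ext x
    obtain ⟨y, rfl⟩ := Ideal.Quotient.mk_surjective x
    exact DFunLike.congr_fun this y
  apply IsLocalization.algHom_ext (nonvanishing v)
  apply MvPolynomial.algHom_ext
  exact h

lemma trans_comp {F G l1 l2 : MvPolynomial (Fin 3) ℂ}
    (hl1 : l1.IsHomogeneous 1)
    (v1 v2 : Fin 3 → ℂ)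
    (φ : BB F G l1 v1 →ₐ[ℂ] BB F G l2 v2) (u) (hu : u * toB F G l2 v2 l1 = 1)
    (hφ : ∀ f, φ (toB F G l1 v1 f) = aeval (fun j => u * toB F G l2 v2 (X j)) f)
    (ψ : BB F G l2 v2 →ₐ[ℂ] BB F G l1 v1) (w) (hw : w * toB F G l1 v1 l2 = 1)
    (hψ : ∀ f, ψ (toB F G l2 v2 f) = aeval (fun j => w * toB F G l1 v1 (X j)) f) :
    ψ.comp φ = AlgHom.id ℂ _ := by
  apply BB_hom_ext
  intro j
  have h1 : ψ (toB F G l2 v2 l1) = w := by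
    rw [hψ, aeval_scale hl1, ← toB_eq, toB_l, pow_one, mul_one]
  have h2 := congrArg ψ hu
  rw [map_mul, h1, map_one] at h2
  rw [AlgHom.comp_apply, hφ, aeval_X, map_mul, hψ, aeval_X, ← mul_assoc, h2, one_mul]
  rfl

lemma finrank_BB {d e : ℕ} {F G l1 l2 : MvPolynomial (Fin 3) ℂ} (hF : F.IsHomogeneous d)
    (hG : G.IsHomogeneous e) (hl1 : l1.IsHomogeneous 1) (hl2 : l2.IsHomogeneous 1)
    (v1 v2 : Fin 3 → ℂ) (c : ℂ) (hc : c ≠ 0) (hv : v1 = fun j => c * v2 j)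
    (h1 : aeval v1 l1 = 1) (h2 : aeval v2 l2 = 1) :
    Module.finrank ℂ (BB F G l1 v1) = Module.finrank ℂ (BB F G l2 v2) := by
  obtain ⟨φ, u, hu, hφ⟩ := trans_hom (l2 := l2) hF hG hl1 v1 v2 c hc hv h1
  obtain ⟨ψ, w, hw, hψ⟩ := trans_hom (l2 := l1) hF hG hl2 v2 v1 c⁻¹ (inv_ne_zero hc)
    (by rw [hv]; funext j; field_simp) h2
  exact (AlgEquiv.ofAlgHom φ ψ (trans_comp hl2 v2 v1 ψ w hw hψ φ u hu hφ)
    (trans_comp hl1 v1 v2 φ u hu hφ ψ w hw hψ)).toLinearEquiv.finrank_eq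

lemma finrank_eq_sum_loc {A : Type} [CommRing A] [Algebra ℂ A] [FiniteDimensional ℂ A] :
    Finite (MaximalSpectrum A) ∧
    Module.finrank ℂ A =
      ∑ᶠ m : MaximalSpectrum A, Module.finrank ℂ (Localization.AtPrime m.asIdeal) := by
  have : IsArtinianRing A := IsArtinianRing.of_finite ℂ A
  have hfin : Finite (MaximalSpectrum A) := inferInstance
  refine ⟨hfin, ?_⟩
  let e := ((MaximalSpectrum.toPiLocalizationEquiv A).restrictScalars ℂ).toLinearEquiv
  have : Fintype (MaximalSpectrum A) := Fintype.ofFinite _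
  have hfd : FiniteDimensional ℂ (MaximalSpectrum.PiLocalization A) := e.finiteDimensional
  have hfd2 : ∀ m : MaximalSpectrum A, FiniteDimensional ℂ (Localization.AtPrime m.asIdeal) := by
    intro m
    exact Module.Finite.of_surjective
      (LinearMap.proj m : MaximalSpectrum.PiLocalization A →ₗ[ℂ] Localization.AtPrime m.asIdeal)
      (LinearMap.proj_surjective m)
  rw [e.finrank_eq, finsum_eq_sum_of_fintype]
  exact Module.finrank_pi_fintype ℂ

/-- Points of an ideal. -/
abbrev Pts (I : Ideal (MvPolynomial (Fin 3) ℂ)) : Type :=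
  {v : Fin 3 → ℂ // ∀ f ∈ I, aeval v f = 0}

/-- Evaluation at a point of an ideal. -/
def evI (I : Ideal (MvPolynomial (Fin 3) ℂ)) (v : Pts I) :
    (MvPolynomial (Fin 3) ℂ ⧸ I) →+* ℂ :=
  Ideal.Quotient.lift I (aeval v.1 : MvPolynomial (Fin 3) ℂ →ₐ[ℂ] ℂ).toRingHom v.2

lemma evI_mk (I : Ideal (MvPolynomial (Fin 3) ℂ)) (v : Pts I) (f) :
    evI I v (Ideal.Quotient.mk I f) = aeval v.1 f := rfl

lemma evI_surj (I : Ideal (MvPolynomial (Fin 3) ℂ)) (v : Pts I) :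
    Function.Surjective (evI I v) := by
  intro c
  refine ⟨Ideal.Quotient.mk I (C c), ?_⟩
  rw [evI_mk]
  simp

/-- The maximal ideal of a point. -/
def maxI (I : Ideal (MvPolynomial (Fin 3) ℂ)) (v : Pts I) :
    MaximalSpectrum (MvPolynomial (Fin 3) ℂ ⧸ I) :=
  ⟨RingHom.ker (evI I v), RingHom.ker_isMaximal_of_surjective _ (evI_surj I v)⟩

lemma maxI_bij (I : Ideal (MvPolynomial (Fin 3) ℂ)) : Function.Bijective (maxI I) := by
  constructor
  · intro v w h
    apply Subtype.ext
    funext j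
    have h1 : Ideal.Quotient.mk I (X j - C (v.1 j)) ∈ (maxI I v).asIdeal := by
      change evI I v _ = 0
      rw [evI_mk]; simp
    rw [h] at h1
    change evI I w _ = 0 at h1
    rw [evI_mk] at h1
    simp only [map_sub, aeval_X, algHom_C, sub_eq_zero] at h1
    exact h1.symm
  · intro m
    have := m.2
    have h1 : (m.asIdeal.comap (Ideal.Quotient.mk I)).IsMaximal :=
      Ideal.comap_isMaximal_of_surjective _ Ideal.Quotient.mk_surjective
    obtain ⟨v, hv⟩ := isMaximal_iff_eq_vanishingIdeal_singleton.mp h1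
    have h2 : ∀ f, Ideal.Quotient.mk I f ∈ m.asIdeal ↔ aeval v f = 0 := by
      intro f
      rw [← Ideal.mem_comap, hv]
      exact mem_vanishingIdeal_singleton_iff v f
    refine ⟨⟨v, ?_⟩, ?_⟩
    · intro f hf
      rw [← h2, Ideal.Quotient.eq_zero_iff_mem.mpr hf]
      exact Ideal.zero_mem _
    · apply MaximalSpectrum.ext
      ext x
      obtain ⟨f, rfl⟩ := Ideal.Quotient.mk_surjective x
      rw [h2]
      rfl

lemma finrank_loc (I : Ideal (MvPolynomial (Fin 3) ℂ)) (v : Pts I) :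
    Module.finrank ℂ (Localization.AtPrime (maxI I v).asIdeal) =
    Module.finrank ℂ (Localization (nonvanishing v.1) ⧸
      I.map (algebraMap (MvPolynomial (Fin 3) ℂ) (Localization (nonvanishing v.1)))) := by
  have h1 : Algebra.algebraMapSubmonoid (MvPolynomial (Fin 3) ℂ ⧸ I) (nonvanishing v.1) =
      (maxI I v).asIdeal.primeCompl := by
    ext x
    constructor
    · rintro ⟨f, hf, rfl⟩
      exact hf
    · intro hx
      obtain ⟨f, rfl⟩ := Ideal.Quotient.mk_surjective x
      exact ⟨f, hx, rfl⟩
  have h2 : IsLocalization (maxI I v).asIdeal.primeCompl (Localization (nonvanishing v.1) ⧸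
      I.map (algebraMap (MvPolynomial (Fin 3) ℂ) (Localization (nonvanishing v.1)))) := by
    rw [← h1]; infer_instance
  let e := IsLocalization.algEquiv (maxI I v).asIdeal.primeCompl
    (Localization.AtPrime (maxI I v).asIdeal) (Localization (nonvanishing v.1) ⧸
      I.map (algebraMap (MvPolynomial (Fin 3) ℂ) (Localization (nonvanishing v.1))))
  have : IsScalarTower ℂ (MvPolynomial (Fin 3) ℂ ⧸ I) (Localization (nonvanishing v.1) ⧸
      I.map (algebraMap (MvPolynomial (Fin 3) ℂ) (Localization (nonvanishing v.1)))) := by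
    refine ⟨fun c x y => ?_⟩
    obtain ⟨x, rfl⟩ := Ideal.Quotient.mk_surjective x
    obtain ⟨y, rfl⟩ := Ideal.Quotient.mk_surjective y
    have e1 : c • Ideal.Quotient.mk I x = Ideal.Quotient.mk I (c • x) := rfl
    have e2 : ∀ z : Localization (nonvanishing v.1), c • Ideal.Quotient.mk (I.map (algebraMap (MvPolynomial (Fin 3) ℂ) (Localization (nonvanishing v.1)))) z =
      Ideal.Quotient.mk (I.map (algebraMap (MvPolynomial (Fin 3) ℂ) (Localization (nonvanishing v.1)))) (c • z) := fun _ => rfl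
    have e3 : ∀ f : MvPolynomial (Fin 3) ℂ,
        Ideal.Quotient.mk I f • Ideal.Quotient.mk (I.map (algebraMap (MvPolynomial (Fin 3) ℂ) (Localization (nonvanishing v.1)))) y =
        Ideal.Quotient.mk (I.map (algebraMap (MvPolynomial (Fin 3) ℂ) (Localization (nonvanishing v.1)))) (f • y) := by
      intro f
      rw [Algebra.smul_def, Ideal.Quotient.algebraMap_quotient_map_quotient, ← map_mul,
        ← Algebra.smul_def]
    rw [e1, e3, e3, e2, smul_assoc]
  exact (e.restrictScalars ℂ).toLinearEquiv.finrank_eq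

lemma finrank_points (I : Ideal (MvPolynomial (Fin 3) ℂ))
    [FiniteDimensional ℂ (MvPolynomial (Fin 3) ℂ ⧸ I)] :
    Finite (Pts I) ∧ Module.finrank ℂ (MvPolynomial (Fin 3) ℂ ⧸ I) =
      ∑ᶠ v : Pts I, Module.finrank ℂ (Localization (nonvanishing v.1) ⧸
      I.map (algebraMap (MvPolynomial (Fin 3) ℂ) (Localization (nonvanishing v.1)))) := by
  obtain ⟨h1, h2⟩ := finrank_eq_sum_loc (A := MvPolynomial (Fin 3) ℂ ⧸ I)
  refine ⟨Finite.of_injective _ (maxI_bij I).1, ?_⟩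
  rw [h2]
  symm
  apply finsum_eq_of_bijective _ (maxI_bij I)
  intro v
  exact (finrank_loc I v).symm

lemma mem_JJ_iff (F G l : MvPolynomial (Fin 3) ℂ) (v : Fin 3 → ℂ) :
    (∀ f ∈ JJ F G l, aeval v f = 0) ↔ aeval v F = 0 ∧ aeval v G = 0 ∧ aeval v l = 1 := by
  constructor
  · intro h
    refine ⟨h _ (Ideal.subset_span (by simp)), h _ (Ideal.subset_span (by simp)), ?_⟩
    have := h (l - 1) (Ideal.subset_span (by simp))
    rwa [map_sub, map_one, sub_eq_zero] at this
  · rintro ⟨h1, h2, h3⟩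
    have : JJ F G l ≤ RingHom.ker (aeval v : MvPolynomial (Fin 3) ℂ →ₐ[ℂ] ℂ) := by
      rw [JJ, Ideal.span_le]
      rintro y (rfl | rfl | rfl)
      · exact h1
      · exact h2
      · change aeval v (l - 1) = 0
        rw [map_sub, map_one, h3, sub_self]
    intro f hf
    exact this hf

lemma JJ_map (F G l : MvPolynomial (Fin 3) ℂ) (v : Fin 3 → ℂ) :
    (JJ F G l).map (algebraMap (MvPolynomial (Fin 3) ℂ) (Localization (nonvanishing v))) =
    Ideal.span {algebraMap (MvPolynomial (Fin 3) ℂ) (Localization (nonvanishing v)) F,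
        algebraMap (MvPolynomial (Fin 3) ℂ) (Localization (nonvanishing v)) G,
        algebraMap (MvPolynomial (Fin 3) ℂ) (Localization (nonvanishing v)) (l - 1)} := by
  rw [JJ, Ideal.map_span, Set.image_insert_eq, Set.image_insert_eq, Set.image_singleton]

lemma finrank_AA_eq (F G l : MvPolynomial (Fin 3) ℂ) [h : FiniteDimensional ℂ (AA F G l)] :
    Finite (Pts (JJ F G l)) ∧ Module.finrank ℂ (AA F G l) =
      ∑ᶠ v : Pts (JJ F G l), Module.finrank ℂ (BB F G l v.1) := by
  have h' : FiniteDimensional ℂ (MvPolynomial (Fin 3) ℂ ⧸ JJ F G l) := h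
  obtain ⟨h1, h2⟩ := finrank_points (JJ F G l)
  refine ⟨h1, h2.trans ?_⟩
  apply finsum_congr
  intro v
  rw [JJ_map]
  rfl

lemma projMult_eq {d e : ℕ} {F G l : MvPolynomial (Fin 3) ℂ} (hF : F.IsHomogeneous d)
    (hG : G.IsHomogeneous e) (hl : l.IsHomogeneous 1) (v : Fin 3 → ℂ) (hv0 : v ≠ 0)
    (hv : aeval v l = 1) :
    projMult F G (Projectivization.mk ℂ v hv0) = Module.finrank ℂ (BB F G l v) := by
  set p := Projectivization.mk ℂ v hv0 with hp
  let i := Classical.choose (Function.ne_iff.mp p.rep_nonzero)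
  have hi : p.rep i ≠ 0 := Classical.choose_spec (Function.ne_iff.mp p.rep_nonzero)
  obtain ⟨a, ha⟩ := Projectivization.exists_smul_eq_mk_rep ℂ v hv0
  rw [← hp] at ha
  have h1 : projMult F G p = Module.finrank ℂ (BB F G (X i) ((p.rep i)⁻¹ • p.rep)) := rfl
  rw [h1]
  apply finrank_BB hF hG (isHomogeneous_X ℂ i) hl _ _ ((p.rep i)⁻¹ * a)
    (mul_ne_zero (inv_ne_zero hi) a.ne_zero) _ _ hv
  · funext j
    have := congrFun ha j
    rw [Pi.smul_apply, smul_eq_mul, ← this, Pi.smul_apply, Units.smul_def, smul_eq_mul, mul_assoc]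
  · rw [aeval_X, Pi.smul_apply, smul_eq_mul, inv_mul_cancel₀ hi]

lemma projMult_zero {d e : ℕ} {F G : MvPolynomial (Fin 3) ℂ} (hF : F.IsHomogeneous d)
    (hG : G.IsHomogeneous e) (p : Projectivization ℂ (Fin 3 → ℂ))
    (h : aeval p.rep F ≠ 0 ∨ aeval p.rep G ≠ 0) : projMult F G p = 0 := by
  let i := Classical.choose (Function.ne_iff.mp p.rep_nonzero)
  have hi : p.rep i ≠ 0 := Classical.choose_spec (Function.ne_iff.mp p.rep_nonzero)
  have h1 : projMult F G p = Module.finrank ℂ (BB F G (X i) (fun j => (p.rep i)⁻¹ * p.rep j)) := rfl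
  rw [h1]
  apply BB_subsingleton
  rw [aeval_scale hF, aeval_scale hG]
  exact h.imp (mul_ne_zero (pow_ne_zero _ (inv_ne_zero hi)))
    (mul_ne_zero (pow_ne_zero _ (inv_ne_zero hi)))

/-- A linear form not vanishing on a finite set of nonzero vectors. -/
lemma exists_form (T : Set (Fin 3 → ℂ)) (hT : T.Finite) (h0 : ∀ v ∈ T, v ≠ 0) :
    ∃ l : MvPolynomial (Fin 3) ℂ, l.IsHomogeneous 1 ∧ ∀ v ∈ T, aeval v l ≠ 0 := by
  let lin : (Fin 3 → ℂ) → MvPolynomial (Fin 3) ℂ := fun v => ∑ j, C (v j) * X j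
  have hlin : ∀ v w, aeval w (lin v) = ∑ j, v j * w j := by
    intro v w
    simp [lin]
  have hhom : ∀ v, (lin v).IsHomogeneous 1 := by
    intro v
    apply IsHomogeneous.sum
    intro j _
    have := (isHomogeneous_C (Fin 3) (v j)).mul (isHomogeneous_X ℂ j)
    simpa using this
  have hne : ∀ v ∈ T, lin v ≠ 0 := by
    intro v hv h
    apply h0 v hv
    funext j
    have := hlin v (Pi.single j 1)
    rw [h, map_zero] at this
    simpa [Pi.single_apply] using this.symm
  have hprod : (∏ v ∈ hT.toFinset, lin v) ≠ 0 := by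
    rw [Finset.prod_ne_zero_iff]
    intro v hv
    exact hne v (hT.mem_toFinset.mp hv)
  have : ∃ c : Fin 3 → ℂ, aeval c (∏ v ∈ hT.toFinset, lin v) ≠ 0 := by
    by_contra! hcon
    apply hprod
    apply MvPolynomial.funext
    intro c
    have := hcon c
    rw [map_zero]
    rwa [aeval_eq_eval] at this
  obtain ⟨c, hc⟩ := this
  refine ⟨lin c, hhom c, ?_⟩
  intro v hv
  rw [map_prod, Finset.prod_ne_zero_iff] at hc
  have := hc v (hT.mem_toFinset.mpr hv)
  rw [hlin] at this ⊢
  simpa only [mul_comm] using this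

lemma bezout {d e : ℕ} {F G : MvPolynomial (Fin 3) ℂ} (hF : F.IsHomogeneous d)
    (hG : G.IsHomogeneous e) (hF0 : F ≠ 0) (hG0 : G ≠ 0) (hrel : IsRelPrime F G) :
    ∑ᶠ p : Projectivization ℂ (Fin 3 → ℂ), projMult F G p = d * e := by
  let T : Set (Fin 3 → ℂ) := ⋃ i : Fin 3, {v | ∀ f ∈ JJ F G (X i), aeval v f = 0}
  have hT : T.Finite := by
    apply Set.finite_iUnion
    intro i
    have := finite_AA hF hG (isHomogeneous_X ℂ i) hF0 hG0 hrel
    have h1 := (finrank_AA_eq F G (X i)).1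
    exact Set.finite_coe_iff.mp h1
  obtain ⟨l, hl, hlT⟩ := exists_form T hT (by
    intro v hv h
    obtain ⟨i, hi⟩ := Set.mem_iUnion.mp hv
    have := ((mem_JJ_iff F G (X i) v).mp hi).2.2
    rw [h] at this
    simp at this)
  have hz : ∀ v : Fin 3 → ℂ, aeval v F = 0 → aeval v G = 0 → aeval v l = 0 → v = 0 := by
    intro v hvF hvG hvl
    by_contra hv
    obtain ⟨i, hi⟩ := Function.ne_iff.mp hv
    apply hlT (fun j => (v i)⁻¹ * v j)
    · refine Set.mem_iUnion.mpr ⟨i, (mem_JJ_iff F G (X i) _).mpr ⟨?_, ?_, ?_⟩⟩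
      · rw [aeval_scale hF, hvF, mul_zero]
      · rw [aeval_scale hG, hvG, mul_zero]
      · rw [aeval_X, inv_mul_cancel₀ hi]
    · rw [aeval_scale hl, hvl, mul_zero]
  have hfin := finite_AA hF hG hl hF0 hG0 hrel
  rw [← finrank_AA hF hG hl hF0 hG0 hrel hz, (finrank_AA_eq F G l).2]
  have hl1 : ∀ v : Pts (JJ F G l), aeval v.1 l = 1 := fun v => ((mem_JJ_iff F G l v.1).mp v.2).2.2
  have hne : ∀ v : Pts (JJ F G l), v.1 ≠ 0 := by
    intro v h
    have h1 := hl1 v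
    have : v.1 = fun j => (0 : ℂ) * v.1 j := by rw [h]; funext j; simp
    rw [this, aeval_scale hl] at h1
    simp at h1
  let φ : Pts (JJ F G l) → Projectivization ℂ (Fin 3 → ℂ) :=
    fun v => Projectivization.mk ℂ v.1 (hne v)
  have hφ : Function.Injective φ := by
    intro v w h
    obtain ⟨a, ha⟩ := (Projectivization.mk_eq_mk_iff' ℂ _ _ (hne v) (hne w)).mp h
    have h1 : v.1 = fun j => a * w.1 j := by rw [← ha]; rfl
    have h2 := hl1 v
    rw [h1, aeval_scale hl, hl1 w, pow_one, mul_one] at h2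
    apply Subtype.ext
    rw [h1, h2]
    funext j
    rw [one_mul]
  have hsupp : Function.support (projMult F G) ⊆ Set.range φ := by
    intro p hp
    have hFG : aeval p.rep F = 0 ∧ aeval p.rep G = 0 := by
      by_contra hcon
      exact hp (projMult_zero hF hG p (by tauto))
    have hlp : aeval p.rep l ≠ 0 := fun h => p.rep_nonzero (hz _ hFG.1 hFG.2 h)
    refine ⟨⟨fun j => (aeval p.rep l)⁻¹ * p.rep j, (mem_JJ_iff F G l _).mpr ⟨?_, ?_, ?_⟩⟩, ?_⟩
    · rw [aeval_scale hF, hFG.1, mul_zero]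
    · rw [aeval_scale hG, hFG.2, mul_zero]
    · rw [aeval_scale hl, pow_one, inv_mul_cancel₀ hlp]
    · conv_rhs => rw [← p.mk_rep]
      rw [Projectivization.mk_eq_mk_iff']
      exact ⟨(aeval p.rep l)⁻¹, rfl⟩
  have h1 : ∑ᶠ p, projMult F G p = ∑ᶠ p ∈ Set.range φ, projMult F G p := by
    rw [← finsum_mem_univ]
    apply finsum_mem_inter_support_eq'
    intro p hp
    exact ⟨fun _ => hsupp hp, fun _ => Set.mem_univ p⟩
  rw [h1, finsum_mem_range hφ]
  apply finsum_congr
  intro v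
  exact projMult_eq hF hG hl v.1 (hne v) (hl1 v)

lemma hess_homog {d : ℕ} (hd : 2 ≤ d) {F : MvPolynomial (Fin 3) ℂ} (hF : F.IsHomogeneous d) :
    (hessPoly F).IsHomogeneous (3 * (d - 2)) := by
  have h : ∀ i j, (pderiv i (pderiv j F)).IsHomogeneous (d - 2) := by
    intro i j
    have := (hF.pderiv (i := j)).pderiv (i := i)
    rwa [Nat.sub_sub] at this
  rw [hessPoly, Matrix.det_apply]
  apply IsHomogeneous.sum
  intro σ _
  have h2 : (∏ i, Matrix.of (fun i j : Fin 3 => pderiv i (pderiv j F)) (σ i) i).IsHomogeneous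
      (3 * (d - 2)) := by
    have := IsHomogeneous.prod Finset.univ
      (fun i => Matrix.of (fun i j : Fin 3 => pderiv i (pderiv j F)) (σ i) i) (fun _ => d - 2)
      (fun i _ => h _ _)
    simpa using this
  rcases Int.units_eq_one_or (Equiv.Perm.sign σ) with hs | hs
  · rw [hs, one_smul]; exact h2
  · rw [hs, Units.neg_smul, one_smul]; exact h2.neg

/-- A nonsingular complex plane projective curve of degree `d ≥ 2`, reduced and
containing no line, meets its Hessian curve in exactly `3d(d-2)` points counted
with multiplicity. -/
theorem stmt_11 (d : ℕ) (hd : 2 ≤ d) (F : MvPolynomial (Fin 3) ℂ)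
    (hF : F.IsHomogeneous d)
    (hsm : ∀ v : Fin 3 → ℂ, v ≠ 0 → aeval v F = 0 → ∃ i, aeval v (pderiv i F) ≠ 0)
    (hred : Squarefree F)
    (hline : ¬ ∃ L : MvPolynomial (Fin 3) ℂ, L.IsHomogeneous 1 ∧ L ∣ F) :
    ∑ᶠ p : Projectivization ℂ (Fin 3 → ℂ), projMult F (hessPoly F) p = 3 * d * (d - 2) := by
  have hF0 : F ≠ 0 := hred.ne_zero
  have hrel := relPrime_hess d hd F hF hsm hF0 hline
  have hG0 : hessPoly F ≠ 0 := by
    intro h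
    rw [h] at hrel
    have hu : IsUnit F := hrel dvd_rfl (dvd_zero F)
    have h1 : IsUnit (aeval (fun j : Fin 3 => (0 : ℂ) * (0 : ℂ)) F) := hu.map _
    rw [aeval_scale hF 0 (fun _ => 0), zero_pow (by omega), zero_mul] at h1
    exact not_isUnit_zero h1
  rw [bezout hF (hess_homog hd hF) hF0 hG0 hrel]
  ring

end
end

section
/- Any primitive regular integer triangulation of the triangle T_d can be transformed into any other by a finite sequence of flips (replacing the triangulation of a unit parallelogram formed by two adjacent primitive triangles by the other diagonal triangulation). -/
noncomputable section

/-- Inclusion of lattice points into the plane. -/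
def toRp (p : ℤ × ℤ) : ℝ × ℝ := ((p.1 : ℝ), (p.2 : ℝ))

/-- The lattice points of the triangle `T_d` with vertices `(0,0)`, `(d,0)`,
`(0,d)`. -/
def TdPts (d : ℕ) : Set (ℤ × ℤ) :=
  {p | 0 ≤ p.1 ∧ 0 ≤ p.2 ∧ p.1 + p.2 ≤ (d : ℤ)}

/-- A primitive lattice triangle: three vertices spanning integer area 1. -/
def IsPrimTriangle (t : Finset (ℤ × ℤ)) : Prop :=
  ∃ x y z : ℤ × ℤ, t = {x, y, z} ∧
    ((y.1 - x.1) * (z.2 - x.2) - (y.2 - x.2) * (z.1 - x.1)).natAbs = 1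

/-- A primitive triangulation of `T_d`: a finite set of primitive lattice
triangles with vertices in `T_d`, covering `T_d`, any two of which meet along
their common face. -/
def IsPrimTriangulation (d : ℕ) (T : Finset (Finset (ℤ × ℤ))) : Prop :=
  (∀ t ∈ T, IsPrimTriangle t ∧ (t : Set (ℤ × ℤ)) ⊆ TdPts d) ∧
  (⋃ t ∈ T, convexHull ℝ (toRp '' (t : Set (ℤ × ℤ)))) = convexHull ℝ (toRp '' TdPts d) ∧
  (∀ t ∈ T, ∀ t' ∈ T,
    convexHull ℝ (toRp '' (t : Set (ℤ × ℤ))) ∩ convexHull ℝ (toRp '' (t' : Set (ℤ × ℤ))) =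
      convexHull ℝ (toRp '' ((t ∩ t' : Finset (ℤ × ℤ)) : Set (ℤ × ℤ))))

/-- Regularity (convexity) of a triangulation of `T_d`: it is induced by the
domains of linearity of a convex piecewise-linear function on `T_d`. -/
def IsRegularTriangulation (d : ℕ) (T : Finset (Finset (ℤ × ℤ))) : Prop :=
  ∃ ν : ℤ × ℤ → ℝ, ∀ t ∈ T, ∃ u : ℝ × ℝ, ∃ r : ℝ,
    (∀ p ∈ t, u.1 * (p.1 : ℝ) + u.2 * (p.2 : ℝ) + r = ν p) ∧
    (∀ q ∈ TdPts d, q ∉ t → u.1 * (q.1 : ℝ) + u.2 * (q.2 : ℝ) + r < ν q)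

/-- A flip: two primitive triangles of `T` sharing an edge and forming a unit
parallelogram are replaced by the triangulation along the other diagonal. -/
def IsFlip (T T' : Finset (Finset (ℤ × ℤ))) : Prop :=
  ∃ x y z w : ℤ × ℤ,
    ({x, y, z} : Finset (ℤ × ℤ)) ∈ T ∧ ({x, y, w} : Finset (ℤ × ℤ)) ∈ T ∧
    z ≠ w ∧ z + w = x + y ∧
    T' = (T \ {({x, y, z} : Finset (ℤ × ℤ)), ({x, y, w} : Finset (ℤ × ℤ))}) ∪
      {({x, z, w} : Finset (ℤ × ℤ)), ({y, z, w} : Finset (ℤ × ℤ))}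

def dZ (a b c : ℤ × ℤ) : ℤ := (b.1 - a.1) * (c.2 - a.2) - (b.2 - a.2) * (c.1 - a.1)

def dR (a b : ℤ × ℤ) (p : ℝ × ℝ) : ℝ :=
  ((b.1 : ℝ) - a.1) * (p.2 - a.2) - ((b.2 : ℝ) - a.2) * (p.1 - a.1)

def Hu (t : Finset (ℤ × ℤ)) : Set (ℝ × ℝ) := convexHull ℝ (toRp '' (t : Set (ℤ × ℤ)))

def Gen (p : ℝ × ℝ) : Prop := ∀ u v c : ℤ, (u : ℝ) * p.1 + v * p.2 = c → u = 0 ∧ v = 0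

def TInv (d : ℕ) (T : Finset (Finset (ℤ × ℤ))) : Prop :=
  (∀ t ∈ T, IsPrimTriangle t ∧ (t : Set (ℤ × ℤ)) ⊆ TdPts d) ∧
  (∀ p, Gen p → 0 < p.1 → 0 < p.2 → p.1 + p.2 < d → ∃ t ∈ T, p ∈ Hu t) ∧
  (∀ p, Gen p → ∀ t ∈ T, ∀ t' ∈ T, p ∈ Hu t → p ∈ Hu t' → t = t')

lemma dZ_rot (a b c : ℤ × ℤ) : dZ b c a = dZ a b c := by unfold dZ; ring

lemma dR_toRp (a b c : ℤ × ℤ) : dR a b (toRp c) = dZ a b c := by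
  unfold dR dZ toRp; push_cast; ring

lemma dR_cont (a b : ℤ × ℤ) : Continuous (dR a b) := by unfold dR; fun_prop

lemma dR_affine (a b : ℤ × ℤ) (p q : ℝ × ℝ) (s t : ℝ) (h : s + t = 1) :
    dR a b (s • p + t • q) = s * dR a b p + t * dR a b q := by
  have : s = 1 - t := by linarith
  subst this
  simp [dR]; ring

lemma half_convex (a b : ℤ × ℤ) : Convex ℝ {p | 0 ≤ dR a b p} := by
  intro p hp q hq s t hs ht h
  simp only [Set.mem_ofPred_eq] at *
  rw [dR_affine _ _ _ _ _ _ h]; positivity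

lemma ccw_exists {t : Finset (ℤ × ℤ)} (h : IsPrimTriangle t) :
    ∃ a b c, t = {a, b, c} ∧ dZ a b c = 1 := by
  obtain ⟨x, y, z, rfl, h⟩ := h
  rcases Int.natAbs_eq_iff.mp h with h | h
  · exact ⟨x, y, z, rfl, by unfold dZ; simpa using h⟩
  · refine ⟨x, z, y, ?_, ?_⟩
    · ext; simp; tauto
    · unfold dZ; push_cast at h; linarith

lemma prim_of {a b c : ℤ × ℤ} (h : dZ a b c = 1) : IsPrimTriangle {a, b, c} :=
  ⟨a, b, c, rfl, by unfold dZ at h; rw [h]; rfl⟩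

lemma ne_of {a b c : ℤ × ℤ} (h : dZ a b c = 1) : a ≠ b ∧ b ≠ c ∧ c ≠ a := by
  refine ⟨?_, ?_, ?_⟩ <;> rintro rfl <;> unfold dZ at h <;> ring_nf at h <;> omega

lemma mem_Hu {a b c : ℤ × ℤ} (h : dZ a b c = 1) (p : ℝ × ℝ) :
    p ∈ Hu {a, b, c} ↔ 0 ≤ dR a b p ∧ 0 ≤ dR b c p ∧ 0 ≤ dR c a p := by
  have hR : ((b.1 : ℝ) - a.1) * (c.2 - a.2) - (b.2 - a.2) * (c.1 - a.1) = 1 := by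
    unfold dZ at h; exact_mod_cast h
  constructor
  · intro hp
    have key : ∀ u v : ℤ × ℤ, 0 ≤ dZ u v a → 0 ≤ dZ u v b → 0 ≤ dZ u v c → 0 ≤ dR u v p := by
      intro u v h1 h2 h3
      refine convexHull_min (s := toRp '' (({a, b, c} : Finset (ℤ × ℤ)) : Set (ℤ × ℤ))) (t := {p | 0 ≤ dR u v p}) ?_ (half_convex u v) hp
      rintro _ ⟨q, hq, rfl⟩
      simp only [Set.mem_ofPred_eq, dR_toRp]
      simp at hq
      rcases hq with rfl | rfl | rfl <;> assumption_mod_cast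
    refine ⟨key _ _ ?_ ?_ ?_, key _ _ ?_ ?_ ?_, key _ _ ?_ ?_ ?_⟩ <;> unfold dZ at * <;> nlinarith
  · rintro ⟨h1, h2, h3⟩
    have e : p = dR b c p • toRp a + dR c a p • toRp b + dR a b p • toRp c := by
      ext
      · simp only [dR, toRp, Prod.fst_add, Prod.smul_fst, smul_eq_mul]
        linear_combination (- p.1) * hR
      · simp only [dR, toRp, Prod.snd_add, Prod.smul_snd, smul_eq_mul]
        linear_combination (- p.2) * hR
    have s : dR b c p + dR c a p + dR a b p = 1 := by
      simp only [dR]; linear_combination hR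
    unfold Hu
    have hc : Convex ℝ (convexHull ℝ (toRp '' (({a, b, c} : Finset (ℤ × ℤ)) : Set (ℤ × ℤ)))) :=
      convex_convexHull _ _
    have hm : ∀ q ∈ ({a, b, c} : Finset (ℤ × ℤ)),
        toRp q ∈ convexHull ℝ (toRp '' (({a, b, c} : Finset (ℤ × ℤ)) : Set (ℤ × ℤ))) :=
      fun q hq => subset_convexHull _ _ ⟨q, by exact_mod_cast hq, rfl⟩
    have := hc.sum_mem (t := Finset.univ) (w := ![dR b c p, dR c a p, dR a b p])
      (z := ![toRp a, toRp b, toRp c])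
      (by intro i _; fin_cases i <;> simpa) (by simp [Fin.sum_univ_three]; linarith)
      (by
        intro i _; fin_cases i
        · exact hm a (by simp)
        · exact hm b (by simp)
        · exact hm c (by simp))
    simp only [Fin.sum_univ_three] at this
    rw [e]
    exact this

lemma gen_ne {p : ℝ × ℝ} (hp : Gen p) {a b : ℤ × ℤ} (hab : a ≠ b) : dR a b p ≠ 0 := by
  intro h
  have := hp (-(b.2 - a.2)) (b.1 - a.1) ((b.1 - a.1) * a.2 - (b.2 - a.2) * a.1)
    (by unfold dR at h; push_cast; linarith)
  exact hab (Prod.ext (by omega) (by omega))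

lemma mem_Hu_gen {a b c : ℤ × ℤ} (h : dZ a b c = 1) {p : ℝ × ℝ} (hp : Gen p) :
    p ∈ Hu {a, b, c} ↔ 0 < dR a b p ∧ 0 < dR b c p ∧ 0 < dR c a p := by
  obtain ⟨h1, h2, h3⟩ := ne_of h
  rw [mem_Hu h, (gen_ne hp h1).symm.le_iff_lt, (gen_ne hp h2).symm.le_iff_lt,
    (gen_ne hp h3).symm.le_iff_lt]

lemma sqrt_indep (u v c : ℚ) (h : (u : ℝ) * √2 + v * √3 = c) : u = 0 ∧ v = 0 := by
  have h6 : Irrational (√6) := by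
    have := irrational_nrt_of_notint_nrt (x := √6) 2 6 (by norm_num) ?_ (by norm_num)
    · exact this
    · rintro ⟨y, hy⟩
      have h2 : (√6) ^ 2 = 6 := by norm_num
      rw [hy] at h2
      have h3 : y ^ 2 = 6 := by exact_mod_cast h2
      have : y ≤ 2 := by nlinarith
      have : -2 ≤ y := by nlinarith
      interval_cases y <;> omega
  have h3i : Irrational (√3) := by
    simpa using Nat.Prime.irrational_sqrt (p := 3) (by norm_num)
  have e6 : √6 = √2 * √3 := by rw [← Real.sqrt_mul (by norm_num)]; norm_num
  have s2 : √2 * √2 = 2 := by norm_num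
  have s3 : √3 * √3 = 3 := by norm_num
  have huv : u * v = 0 := by
    by_contra hne
    apply h6
    refine ⟨(c ^ 2 - 2 * u ^ 2 - 3 * v ^ 2) / (2 * (u * v)), ?_⟩
    have : (u : ℝ) * v ≠ 0 := by exact_mod_cast hne
    push_cast
    rw [← h, e6, div_eq_iff (by positivity)]
    linear_combination (u : ℝ) ^ 2 * s2 + v ^ 2 * s3
  rcases mul_eq_zero.mp huv with rfl | rfl
  · refine ⟨rfl, ?_⟩
    by_contra hv
    apply h3i
    refine ⟨c / v, ?_⟩
    have : (v : ℝ) ≠ 0 := by exact_mod_cast hv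
    push_cast; rw [← h]; field_simp; simp
  · refine ⟨?_, rfl⟩
    by_contra hv
    apply irrational_sqrt_two
    refine ⟨c / u, ?_⟩
    have : (u : ℝ) ≠ 0 := by exact_mod_cast hv
    push_cast; rw [← h]; field_simp; simp

lemma gen_dense : Dense {p | Gen p} := by
  have h1 : DenseRange (fun q : ℚ × ℚ => ((q.1 : ℝ), (q.2 : ℝ))) :=
    (Rat.denseRange_cast (𝕜 := ℝ)).prodMap (Rat.denseRange_cast (𝕜 := ℝ))
  have h2 := (Homeomorph.addRight ((√2, √3) : ℝ × ℝ)).surjective.denseRange.comp h1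
    (Homeomorph.addRight ((√2, √3) : ℝ × ℝ)).continuous
  refine h2.mono ?_
  rintro _ ⟨q, rfl⟩ u v c h
  simp at h
  have := sqrt_indep u v (c - u * q.1 - v * q.2) (by push_cast; linarith)
  exact_mod_cast this

/-- If finitely many strict inequalities hold at a point, they hold at a generic point. -/
lemma exists_gen {U : Set (ℝ × ℝ)} (hU : IsOpen U) (hne : U.Nonempty) : ∃ p ∈ U, Gen p :=
  let ⟨p, hp, hg⟩ := gen_dense.exists_mem_open hU hne
  ⟨p, hg, hp⟩

lemma card_prim {t : Finset (ℤ × ℤ)} (h : IsPrimTriangle t) : t.card = 3 := by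
  obtain ⟨a, b, c, rfl, h'⟩ := ccw_exists h
  obtain ⟨h1, h2, h3⟩ := ne_of h'
  exact Finset.card_eq_three.mpr ⟨a, b, c, h1, h3.symm, h2, rfl⟩

lemma hull_pair {s : Finset (ℤ × ℤ)} {b c : ℤ × ℤ} (hs : s ⊆ {b, c}) {p : ℝ × ℝ}
    (hp : p ∈ convexHull ℝ (toRp '' (s : Set (ℤ × ℤ)))) : dR b c p = 0 := by
  have k : ∀ u v, dZ u v b = 0 → dZ u v c = 0 → 0 ≤ dR u v p := by
    intro u v h1 h2
    refine convexHull_min (t := {p | 0 ≤ dR u v p}) ?_ (half_convex u v) hp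
    rintro _ ⟨q, hq, rfl⟩
    simp only [Set.mem_ofPred_eq, dR_toRp]
    have := hs hq
    simp at this
    rcases this with rfl | rfl
    · rw [h1]; simp
    · rw [h2]; simp
  have h1 := k b c (by unfold dZ; ring) (by unfold dZ; ring)
  have h2 := k c b (by unfold dZ; ring) (by unfold dZ; ring)
  unfold dR at *
  linarith

lemma inv_of {d : ℕ} (hd : 1 ≤ d) {T} (hT : IsPrimTriangulation d T) : TInv d T := by
  obtain ⟨h1, h2, h3⟩ := hT
  refine ⟨h1, ?_, ?_⟩
  · intro p _ hp1 hp2 hp3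
    have hd' : (0 : ℝ) < d := by exact_mod_cast hd
    have hm : p ∈ convexHull ℝ (toRp '' TdPts d) := by
      have hc : Convex ℝ (convexHull ℝ (toRp '' TdPts d)) := convex_convexHull _ _
      have hmm : ∀ q ∈ TdPts d, toRp q ∈ convexHull ℝ (toRp '' TdPts d) :=
        fun q hq => subset_convexHull _ _ ⟨q, hq, rfl⟩
      have := hc.sum_mem (t := Finset.univ) (w := ![1 - (p.1 + p.2) / d, p.1 / d, p.2 / d])
        (z := ![toRp (0, 0), toRp (d, 0), toRp (0, d)])
        (by
          have : (p.1 + p.2) / d ≤ 1 := by rw [div_le_one hd']; linarith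
          intro i _; fin_cases i
          · simpa using this
          · simp; positivity
          · simp; positivity)
        (by simp [Fin.sum_univ_three]; field_simp; ring)
        (by intro i _; fin_cases i <;> simp <;> apply hmm <;> simp [TdPts])
      convert this using 1
      simp [Fin.sum_univ_three, toRp]
      ext <;> simp <;> field_simp
    rw [← h2] at hm
    simpa [Hu] using hm
  · intro p hp t ht t' ht' hm hm'
    by_contra hne
    have hi : p ∈ convexHull ℝ (toRp '' ((t ∩ t' : Finset (ℤ × ℤ)) : Set (ℤ × ℤ))) := by
      rw [← h3 t ht t' ht']; exact ⟨hm, hm'⟩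
    have hc := card_prim (h1 t ht).1
    have hc' := card_prim (h1 t' ht').1
    have hns : ¬ t ⊆ t' := fun hs => hne (Finset.eq_of_subset_of_card_le hs (by omega))
    obtain ⟨a, b, c, rfl, hab⟩ := ccw_exists (h1 t ht).1
    obtain ⟨n1, n2, n3⟩ := ne_of hab
    have : a ∉ t' ∨ b ∉ t' ∨ c ∉ t' := by
      by_contra! hh
      apply hns
      intro q hq; simp at hq
      rcases hq with rfl | rfl | rfl
      exacts [hh.1, hh.2.1, hh.2.2]
    rcases this with h | h | h
    · refine gen_ne hp n2 (hull_pair ?_ hi)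
      intro q hq; simp at hq ⊢; grind
    · refine gen_ne hp n3 (hull_pair ?_ hi)
      intro q hq; simp at hq ⊢; grind
    · refine gen_ne hp n1 (hull_pair ?_ hi)
      intro q hq; simp at hq ⊢; grind

lemma push {U : Set (ℝ × ℝ)} (hU : IsOpen U) {p : ℝ × ℝ} (hp : p ∈ U) (c : ℝ × ℝ) :
    ∃ e : ℝ, 0 < e ∧ e < 1 ∧ (1 - e) • p + e • c ∈ U := by
  have hc : Continuous (fun e : ℝ => (1 - e) • p + e • c) := by fun_prop
  have h0 : (fun e : ℝ => (1 - e) • p + e • c) 0 ∈ U := by simpa using hp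
  have h1 : ∀ᶠ e in nhdsWithin (0 : ℝ) (Set.Ioi 0), (1 - e) • p + e • c ∈ U :=
    (hc.continuousAt.eventually (hU.mem_nhds h0)).filter_mono nhdsWithin_le_nhds
  have h2 : ∀ᶠ e in nhdsWithin (0 : ℝ) (Set.Ioi 0), e ∈ Set.Ioo (0 : ℝ) 1 :=
    Ioo_mem_nhdsGT one_pos
  obtain ⟨e, he, he'⟩ := (h1.and h2).exists
  exact ⟨e, he'.1, he'.2, he⟩

lemma open_pos (a b : ℤ × ℤ) : IsOpen {p | 0 < dR a b p} :=
  isOpen_lt continuous_const (dR_cont a b)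

/-- The midpoint of a lattice segment. -/
def mid (x y : ℤ × ℤ) : ℝ × ℝ := (((x.1 : ℝ) + y.1) / 2, ((x.2 : ℝ) + y.2) / 2)

lemma dR_mid (a b x y : ℤ × ℤ) : dR a b (mid x y) = ((dZ a b x + dZ a b y : ℤ) : ℝ) / 2 := by
  unfold dR mid dZ; push_cast; ring

lemma near_mid {d : ℕ} {T} (hI : TInv d T) {x y z : ℤ × ℤ} (hx : x ∈ TdPts d) (hy : y ∈ TdPts d)
    (h : dZ x y z = 1) (hb1 : 0 < x.1 + y.1) (hb2 : 0 < x.2 + y.2)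
    (hb3 : x.1 + x.2 + y.1 + y.2 < 2 * d) :
    ∃ t ∈ T, mid x y ∈ closure (Hu t) ∧ ∃ p ∈ Hu t, dR x y p < 0 := by
  have hf : ∃ᶠ p in nhds (mid x y), ∃ t ∈ T, p ∈ Hu t ∧ dR x y p < 0 := by
    rw [Filter.frequently_iff]
    intro U hU
    obtain ⟨V, hVU, hV, hmV⟩ := mem_nhds_iff.mp hU
    have hW : IsOpen {p : ℝ × ℝ | 0 < p.1 ∧ 0 < p.2 ∧ p.1 + p.2 < d} := by
      have h1 : IsOpen {p : ℝ × ℝ | 0 < p.1} := isOpen_lt (by fun_prop) (by fun_prop)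
      have h2 : IsOpen {p : ℝ × ℝ | 0 < p.2} := isOpen_lt (by fun_prop) (by fun_prop)
      have h3 : IsOpen {p : ℝ × ℝ | p.1 + p.2 < d} := isOpen_lt (by fun_prop) (by fun_prop)
      exact h1.inter (h2.inter h3)
    have hmW : mid x y ∈ {p : ℝ × ℝ | 0 < p.1 ∧ 0 < p.2 ∧ p.1 + p.2 < d} := by
      have h1 : (0 : ℝ) < x.1 + y.1 := by exact_mod_cast hb1
      have h2 : (0 : ℝ) < x.2 + y.2 := by exact_mod_cast hb2
      have h3 : (x.1 : ℝ) + x.2 + y.1 + y.2 < 2 * d := by exact_mod_cast hb3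
      refine ⟨?_, ?_, ?_⟩ <;> simp only [mid] <;> linarith
    obtain ⟨e, he, _, hq⟩ := push (hV.inter hW) ⟨hmV, hmW⟩ (toRp (x + y - z))
    have hneg : (1 - e) • mid x y + e • toRp (x + y - z) ∈ {p | 0 < dR y x p} := by
      simp only [Set.mem_ofPred_eq]
      rw [dR_affine _ _ _ _ _ _ (by ring), dR_mid, dR_toRp]
      have e1 : dZ y x x = 0 := by unfold dZ; ring
      have e2 : dZ y x y = 0 := by unfold dZ; ring
      have e3 : dZ y x (x + y - z) = 1 := by
        rw [← h]; unfold dZ; simp; ring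
      rw [e1, e2, e3]; simpa using he
    obtain ⟨p, hp, hg⟩ := exists_gen ((hV.inter hW).inter (open_pos y x)) ⟨_, hq, hneg⟩
    obtain ⟨⟨hpV, hp1, hp2, hp3⟩, hp4⟩ := hp
    obtain ⟨t, ht, hpt⟩ := hI.2.1 p hg hp1 hp2 hp3
    refine ⟨p, hVU hpV, t, ht, hpt, ?_⟩
    simp only [Set.mem_ofPred_eq] at hp4
    unfold dR at *; linarith
  have : ∃ t ∈ T, ∃ᶠ p in nhds (mid x y), p ∈ Hu t ∧ dR x y p < 0 := by
    by_contra! hc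
    apply hf
    have : ∀ᶠ p in nhds (mid x y), ∀ t ∈ T, ¬ (p ∈ Hu t ∧ dR x y p < 0) := by
      rw [Filter.eventually_all_finset]
      intro t ht
      filter_upwards [hc t ht] with p hp
      rintro ⟨h1, h2⟩
      linarith [hp h1]
    filter_upwards [this] with p hp
    rintro ⟨t, ht, hh⟩
    exact hp t ht hh
  obtain ⟨t, ht, hfr⟩ := this
  refine ⟨t, ht, ?_, ?_⟩
  · exact mem_closure_iff_frequently.mpr (hfr.mono fun p hp => hp.1)
  · obtain ⟨p, hp⟩ := hfr.exists
    exact ⟨p, hp.1, hp.2⟩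

lemma closed_Hu (t : Finset (ℤ × ℤ)) : IsClosed (Hu t) := by
  unfold Hu
  exact (Set.Finite.isCompact_convexHull (𝕜 := ℝ) (t.finite_toSet.image toRp)).isClosed

lemma rot_set (a b c : ℤ × ℤ) : ({b, c, a} : Finset (ℤ × ℤ)) = {a, b, c} := by
  ext; simp; tauto

lemma neighbor {d : ℕ} {T} (hI : TInv d T) {x y z : ℤ × ℤ} (hA : {x, y, z} ∈ T)
    (h : dZ x y z = 1) (hb1 : 0 < x.1 + y.1) (hb2 : 0 < x.2 + y.2)
    (hb3 : x.1 + x.2 + y.1 + y.2 < 2 * d) :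
    ∃ w, {y, x, w} ∈ T ∧ dZ y x w = 1 := by
  have hsub := (hI.1 _ hA).2
  obtain ⟨t, ht, hm, p, hp, hneg⟩ := near_mid hI (hsub (by simp)) (hsub (by simp)) h hb1 hb2 hb3
  rw [(closed_Hu t).closure_eq] at hm
  have hAt : ({x, y, z} : Finset (ℤ × ℤ)) ≠ t := by
    rintro rfl
    have := ((mem_Hu h p).mp hp).1
    linarith
  -- rotate so that the midpoint lies on the first edge
  have hrot : ∃ b0 b1 b2 : ℤ × ℤ, t = {b0, b1, b2} ∧ dZ b0 b1 b2 = 1 ∧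
      dZ b0 b1 x + dZ b0 b1 y = 0 ∧ 0 ≤ dZ b1 b2 x + dZ b1 b2 y ∧
      0 ≤ dZ b2 b0 x + dZ b2 b0 y := by
    obtain ⟨b0, b1, b2, rfl, hd⟩ := ccw_exists (hI.1 _ ht).1
    obtain ⟨k0, k1, k2⟩ := (mem_Hu hd _).mp hm
    rw [dR_mid] at k0 k1 k2
    have k0 : 0 ≤ dZ b0 b1 x + dZ b0 b1 y := by
      have := mul_nonneg k0 zero_le_two; rw [div_mul_cancel₀ _ two_ne_zero] at this
      exact_mod_cast this
    have k1 : 0 ≤ dZ b1 b2 x + dZ b1 b2 y := by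
      have := mul_nonneg k1 zero_le_two; rw [div_mul_cancel₀ _ two_ne_zero] at this
      exact_mod_cast this
    have k2 : 0 ≤ dZ b2 b0 x + dZ b2 b0 y := by
      have := mul_nonneg k2 zero_le_two; rw [div_mul_cancel₀ _ two_ne_zero] at this
      exact_mod_cast this
    have ks : (dZ b0 b1 x + dZ b0 b1 y) + (dZ b1 b2 x + dZ b1 b2 y) +
        (dZ b2 b0 x + dZ b2 b0 y) = 2 := by
      unfold dZ at *; linarith
    have : dZ b0 b1 x + dZ b0 b1 y = 0 ∨ dZ b1 b2 x + dZ b1 b2 y = 0 ∨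
        dZ b2 b0 x + dZ b2 b0 y = 0 := by
      -- if all were positive, their sum would be at least three
      omega
    rcases this with e | e | e
    · exact ⟨b0, b1, b2, rfl, hd, e, k1, k2⟩
    · exact ⟨b1, b2, b0, (rot_set _ _ _).symm, by rw [dZ_rot, hd], e, k2, k0⟩
    · exact ⟨b2, b0, b1, (rot_set _ _ _), by rw [← dZ_rot, hd], e, k0, k1⟩
  obtain ⟨b0, b1, b2, rfl, hd, k0, k1, k2⟩ := hrot
  have ks : (dZ b1 b2 x + dZ b1 b2 y) + (dZ b2 b0 x + dZ b2 b0 y) = 2 := by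
    unfold dZ at *; linarith
  have c1 : x.1 + y.1 = (dZ b1 b2 x + dZ b1 b2 y) * b0.1 + (dZ b2 b0 x + dZ b2 b0 y) * b1.1 := by
    unfold dZ at *; linear_combination b2.1 * k0 - (x.1 + y.1) * hd
  have c2 : x.2 + y.2 = (dZ b1 b2 x + dZ b1 b2 y) * b0.2 + (dZ b2 b0 x + dZ b2 b0 y) * b1.2 := by
    unfold dZ at *; linear_combination b2.2 * k0 - (x.2 + y.2) * hd
  have par : ∀ b : ℤ × ℤ, x.1 + y.1 = 2 * b.1 → x.2 + y.2 = 2 * b.2 → False := by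
    intro b e1 e2
    have : 2 * ((b.1 - x.1) * (z.2 - x.2) - (b.2 - x.2) * (z.1 - x.1)) = 1 := by
      unfold dZ at h; linear_combination h - (z.2 - x.2) * e1 + (z.1 - x.1) * e2
    omega
  obtain ⟨m1, m2⟩ : dZ b1 b2 x + dZ b1 b2 y = 1 ∧ dZ b2 b0 x + dZ b2 b0 y = 1 := by
    generalize dZ b1 b2 x + dZ b1 b2 y = u at *
    generalize dZ b2 b0 x + dZ b2 b0 y = v at *
    have : u = 0 ∨ u = 1 ∨ u = 2 := by omega
    rcases this with rfl | rfl | rfl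
    · exact (par b1 (by rw [c1]; have : v = 2 := by omega
                        rw [this]; ring) (by rw [c2]; have : v = 2 := by omega
                                             rw [this]; ring)).elim
    · exact ⟨rfl, by omega⟩
    · exact (par b0 (by rw [c1]; have : v = 0 := by omega
                        rw [this]; ring) (by rw [c2]; have : v = 0 := by omega
                                             rw [this]; ring)).elim
  rw [m1, m2] at c1 c2
  simp only [one_mul] at c1 c2
  by_cases hs : dZ x y b0 = 0
  · -- the edges coincide
    obtain ⟨n, hn⟩ : ∃ n, n = (b0.1 - x.1) * (z.2 - x.2) - (b0.2 - x.2) * (z.1 - x.1) := ⟨_, rfl⟩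
    have f1 : b0.1 - x.1 = n * (y.1 - x.1) := by
      unfold dZ at *; linear_combination (- (b0.1 - x.1)) * h + (z.1 - x.1) * hs - (y.1 - x.1) * hn
    have f2 : b0.2 - x.2 = n * (y.2 - x.2) := by
      unfold dZ at *; linear_combination (- (b0.2 - x.2)) * h + (z.2 - x.2) * hs - (y.2 - x.2) * hn
    have hu : (1 - 2 * n) * ((y.1 - x.1) * (b2.2 - b0.2) - (y.2 - x.2) * (b2.1 - b0.1)) = 1 := by
      unfold dZ at hd
      linear_combination hd + (b2.2 - b0.2) * (c1 + 2 * f1) - (b2.1 - b0.1) * (c2 + 2 * f2)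
    have hn' : n = 0 ∨ n = 1 := by
      rcases Int.eq_one_or_neg_one_of_mul_eq_one hu with h | h <;> omega
    rcases hn' with rfl | rfl
    · have e0 : b0 = x := Prod.ext (by linarith) (by linarith)
      subst e0
      have e1 : b1 = y := Prod.ext (by linarith) (by linarith)
      subst e1
      have := ((mem_Hu hd p).mp hp).1
      linarith
    · have e0 : b0 = y := Prod.ext (by linarith) (by linarith)
      subst e0
      have e1 : b1 = x := Prod.ext (by linarith) (by linarith)
      subst e1
      exact ⟨b2, ht, hd⟩
  · exfalso
    obtain ⟨c, hc, hcz⟩ : ∃ c, 0 < dZ x y c ∧ dZ b0 b1 c = 0 := by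
      rcases lt_or_gt_of_ne hs with h1 | h1
      · refine ⟨b1, ?_, by unfold dZ; ring⟩
        have : dZ x y b0 + dZ x y b1 = 0 := by
          unfold dZ; linear_combination (- (y.1 - x.1)) * c2 + (y.2 - x.2) * c1
        omega
      · exact ⟨b0, h1, by unfold dZ; ring⟩
    have hU : IsOpen ((({p | 0 < dR b1 b2 p} ∩ {p | 0 < dR b2 b0 p}) ∩ {p | 0 < dR y z p}) ∩
        {p | 0 < dR z x p}) :=
      (((open_pos _ _).inter (open_pos _ _)).inter (open_pos _ _)).inter (open_pos _ _)
    have hmU : mid x y ∈ ((({p | 0 < dR b1 b2 p} ∩ {p | 0 < dR b2 b0 p}) ∩ {p | 0 < dR y z p}) ∩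
        {p | 0 < dR z x p}) := by
      have g1 : dZ y z x + dZ y z y = 1 := by unfold dZ at *; linarith
      have g2 : dZ z x x + dZ z x y = 1 := by unfold dZ at *; linarith
      refine ⟨⟨⟨?_, ?_⟩, ?_⟩, ?_⟩ <;> simp only [Set.mem_ofPred_eq, dR_mid, m1, m2, g1, g2] <;>
        norm_num
    obtain ⟨e, he, _, hq⟩ := push hU hmU (toRp c)
    have hq1 : 0 < dR x y ((1 - e) • mid x y + e • toRp c) := by
      rw [dR_affine _ _ _ _ _ _ (by ring), dR_mid, dR_toRp]
      have e1 : dZ x y x = 0 := by unfold dZ; ring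
      have e2 : dZ x y y = 0 := by unfold dZ; ring
      have : (0 : ℝ) < dZ x y c := by exact_mod_cast hc
      rw [e1, e2]; simp; positivity
    have hq2 : dR b0 b1 ((1 - e) • mid x y + e • toRp c) = 0 := by
      rw [dR_affine _ _ _ _ _ _ (by ring), dR_mid, dR_toRp, k0, hcz]; simp
    generalize (1 - e) • mid x y + e • toRp c = q at hq hq1 hq2
    obtain ⟨e', he', _, hr⟩ := push (hU.inter (open_pos x y)) ⟨hq, hq1⟩ (toRp b2)
    have hr2 : 0 < dR b0 b1 ((1 - e') • q + e' • toRp b2) := by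
      rw [dR_affine _ _ _ _ _ _ (by ring), hq2, dR_toRp, hd]; simpa using he'
    obtain ⟨s, hs, hg⟩ := exists_gen ((hU.inter (open_pos x y)).inter (open_pos b0 b1)) ⟨_, hr, hr2⟩
    obtain ⟨⟨⟨⟨⟨s1, s2⟩, s3⟩, s4⟩, s5⟩, s6⟩ := hs
    simp only [Set.mem_ofPred_eq] at s1 s2 s3 s4 s5 s6
    exact hAt (hI.2.2 s hg _ hA _ ht ((mem_Hu_gen h hg).mpr ⟨s5, s3, s4⟩)
      ((mem_Hu_gen hd hg).mpr ⟨s6, s1, s2⟩))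

def hz (a b : ℤ × ℤ) : ℤ :=
  (b.1 - a.1) ^ 2 + (b.1 - a.1) * (b.2 - a.2) + (b.2 - a.2) ^ 2

lemma hz_nonneg (a b : ℤ × ℤ) : 0 ≤ hz a b := by
  unfold hz; nlinarith [sq_nonneg (b.1 - a.1 + (b.2 - a.2)), sq_nonneg (b.1 - a.1), sq_nonneg (b.2 - a.2)]

lemma hz_symm (a b : ℤ × ℤ) : hz a b = hz b a := by unfold hz; ring

lemma hz_self (a : ℤ × ℤ) : hz a a = 0 := by unfold hz; ring

lemma hz_pos {a b : ℤ × ℤ} (h : a ≠ b) : 0 < hz a b := by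
  rcases (hz_nonneg a b).lt_or_eq with h1 | h1
  · exact h1
  · exfalso; apply h
    unfold hz at h1
    have e1 : (b.1 - a.1) = 0 := by
      nlinarith [sq_nonneg (b.1 - a.1 + 2 * (b.2 - a.2)), sq_nonneg (b.1 - a.1)]
    have e2 : (b.2 - a.2) = 0 := by
      nlinarith [sq_nonneg (2 * (b.1 - a.1) + (b.2 - a.2)), sq_nonneg (b.2 - a.2)]
    exact Prod.ext (by omega) (by omega)

lemma obtuse {x y z : ℤ × ℤ} (h : dZ x y z = 1) (h1 : hz y z ≤ hz x y) (h2 : hz z x ≤ hz x y)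
    (h3 : 1 < hz x y) : hz y z + hz z x < hz x y := by
  have id : 4 * hz y z * hz z x - (hz y z + hz z x - hz x y) ^ 2 = 3 * (dZ x y z) ^ 2 := by
    unfold hz dZ; ring
  rw [h] at id
  obtain ⟨n1, n2, n3⟩ := ne_of h
  have p1 := hz_pos n2
  have p2 := hz_pos n3
  generalize hz y z = u at *
  generalize hz z x = v at *
  generalize hz x y = w at *
  by_contra! hc
  have a1 : (u + v - w) ^ 2 ≤ u * v := by nlinarith
  have a2 : u * v ≤ 1 := by nlinarith
  have a3 : u = 1 := by nlinarith
  have a4 : v = 1 := by nlinarith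
  subst a3 a4
  have : w = 2 := by omega
  subst this
  norm_num at id

def phi (t : Finset (ℤ × ℤ)) : ℤ := ∑ a ∈ t, ∑ b ∈ t, hz a b

def Phi (T : Finset (Finset (ℤ × ℤ))) : ℤ := ∑ t ∈ T, phi t

lemma phi_nonneg (t) : 0 ≤ phi t :=
  Finset.sum_nonneg fun _ _ => Finset.sum_nonneg fun _ _ => hz_nonneg _ _

lemma Phi_nonneg (T) : 0 ≤ Phi T := Finset.sum_nonneg fun _ _ => phi_nonneg _

lemma phi_tri {a b c : ℤ × ℤ} (h : dZ a b c = 1) :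
    phi {a, b, c} = 2 * (hz a b + hz b c + hz c a) := by
  obtain ⟨h1, h2, h3⟩ := ne_of h
  have hs : ∀ f : ℤ × ℤ → ℤ, ∑ q ∈ ({a, b, c} : Finset (ℤ × ℤ)), f q = f a + (f b + f c) := by
    intro f
    rw [Finset.sum_insert (by simp [h1, h3.symm]), Finset.sum_pair h2]
  unfold phi
  simp only [hs, hz_self]
  rw [hz_symm b a, hz_symm c b, hz_symm a c]; ring

set_option maxHeartbeats 2000000 in
lemma flip_step {d : ℕ} {T} (hI : TInv d T) {x y z w : ℤ × ℤ} (hw : z + w = x + y)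
    (hA : {x, y, z} ∈ T) (hB : {x, y, w} ∈ T) (h : dZ x y z = 1) (hlt : hz z w < hz x y) :
    ∃ T', TInv d T' ∧ IsFlip T T' ∧ IsFlip T' T ∧ Phi T' < Phi T := by
  have w1 : w.1 = x.1 + y.1 - z.1 := by have := congrArg Prod.fst hw; simp at this; omega
  have w2 : w.2 = x.2 + y.2 - z.2 := by have := congrArg Prod.snd hw; simp at this; omega
  have hBd : dZ y x w = 1 := by rw [← h]; unfold dZ; rw [w1, w2]; ring
  have hCd : dZ x w z = 1 := by rw [← h]; unfold dZ; rw [w1, w2]; ring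
  have hDd : dZ y z w = 1 := by rw [← h]; unfold dZ; rw [w1, w2]; ring
  have sB : ({x, y, w} : Finset (ℤ × ℤ)) = {y, x, w} := by ext; simp; tauto
  have sC : ({x, z, w} : Finset (ℤ × ℤ)) = {x, w, z} := by ext; simp; tauto
  obtain ⟨nxy, nyz, nzx⟩ := ne_of h
  obtain ⟨_, nxw, nwy⟩ := ne_of hBd
  obtain ⟨_, nwz, _⟩ := ne_of hCd
  have hR : ((y.1 : ℝ) - x.1) * (z.2 - x.2) - (y.2 - x.2) * (z.1 - x.1) = 1 := by
    unfold dZ at h; exact_mod_cast h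
  have w1R : (w.1 : ℝ) = x.1 + y.1 - z.1 := by exact_mod_cast w1
  have w2R : (w.2 : ℝ) = x.2 + y.2 - z.2 := by exact_mod_cast w2
  have i1 : ∀ p, dR y z p = 1 - dR z x p - dR x y p := by
    intro p; simp only [dR]; linear_combination hR
  have i2 : ∀ p, dR y x p = - dR x y p := by
    intro p; simp only [dR]; ring
  have i3 : ∀ p, dR x w p = dR z x p + dR x y p := by
    intro p; simp only [dR, w1R, w2R]; ring
  have i4 : ∀ p, dR w y p = 1 - dR z x p := by
    intro p; simp only [dR, w1R, w2R]; linear_combination hR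
  have i5 : ∀ p, dR w z p = 1 - 2 * dR z x p - dR x y p := by
    intro p; simp only [dR, w1R, w2R]; linear_combination hR
  have i6 : ∀ p, dR z w p = - (1 - 2 * dR z x p - dR x y p) := by
    intro p; rw [← i5]; simp only [dR]; ring
  have mA : ∀ p, Gen p → (p ∈ Hu {x, y, z} ↔
      0 < dR x y p ∧ 0 < 1 - dR z x p - dR x y p ∧ 0 < dR z x p) := by
    intro p hg; rw [mem_Hu_gen h hg, i1]
  have mB : ∀ p, Gen p → (p ∈ Hu {x, y, w} ↔
      0 < - dR x y p ∧ 0 < dR z x p + dR x y p ∧ 0 < 1 - dR z x p) := by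
    intro p hg; rw [sB, mem_Hu_gen hBd hg, i2, i3, i4]
  have mC : ∀ p, Gen p → (p ∈ Hu {x, z, w} ↔
      0 < dR z x p + dR x y p ∧ 0 < 1 - 2 * dR z x p - dR x y p ∧ 0 < dR z x p) := by
    intro p hg; rw [sC, mem_Hu_gen hCd hg, i3, i5]
  have mD : ∀ p, Gen p → (p ∈ Hu {y, z, w} ↔
      0 < 1 - dR z x p - dR x y p ∧ 0 < - (1 - 2 * dR z x p - dR x y p) ∧ 0 < 1 - dR z x p) := by
    intro p hg; rw [mem_Hu_gen hDd hg, i1, i6, i4]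
  have g1 : ∀ p, Gen p → dR x y p ≠ 0 := fun p hg => gen_ne hg nxy
  have g2 : ∀ p, Gen p → 1 - 2 * dR z x p - dR x y p ≠ 0 := fun p hg => by
    rw [← i5]; exact gen_ne hg nwz
  have hAB : ({x, y, z} : Finset (ℤ × ℤ)) ≠ {x, y, w} := by
    intro e
    have : z ∈ ({x, y, w} : Finset (ℤ × ℤ)) := by rw [← e]; simp
    simp at this
    grind
  -- union equality
  have cov : ∀ p, Gen p → (p ∈ Hu {x, y, z} ∨ p ∈ Hu {x, y, w} ↔
      p ∈ Hu {x, z, w} ∨ p ∈ Hu {y, z, w}) := by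
    intro p hg
    rw [mA p hg, mB p hg, mC p hg, mD p hg]
    have k1 := g1 p hg
    have k2 := g2 p hg
    generalize dR z x p = s at *
    generalize dR x y p = t at *
    constructor
    · intro hh
      rcases lt_or_gt_of_ne k2 with k | k
      · right; rcases hh with ⟨_, _, _⟩ | ⟨_, _, _⟩ <;> refine ⟨?_, ?_, ?_⟩ <;> linarith
      · left; rcases hh with ⟨_, _, _⟩ | ⟨_, _, _⟩ <;> refine ⟨?_, ?_, ?_⟩ <;> linarith
    · intro hh
      rcases lt_or_gt_of_ne k1 with k | k
      · right; rcases hh with ⟨_, _, _⟩ | ⟨_, _, _⟩ <;> refine ⟨?_, ?_, ?_⟩ <;> linarith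
      · left; rcases hh with ⟨_, _, _⟩ | ⟨_, _, _⟩ <;> refine ⟨?_, ?_, ?_⟩ <;> linarith
  have disj : ∀ p, Gen p → p ∈ Hu {x, z, w} → p ∈ Hu {y, z, w} → False := by
    intro p hg h1 h2
    rw [mC p hg] at h1
    rw [mD p hg] at h2
    linarith [h1.2.1, h2.2.1]
  -- new triangles are not in `T`
  have overlap : ∀ P : ℝ × ℝ, 0 < dR z x P → 0 < dR x y P → 0 < 1 - dR z x P - dR x y P →
      1 - 2 * dR z x P - dR x y P ≠ 0 → ∃ p, Gen p ∧ p ∈ Hu {x, y, z} ∧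
      ((0 < 1 - 2 * dR z x P - dR x y P → p ∈ Hu {x, z, w}) ∧
       (0 < - (1 - 2 * dR z x P - dR x y P) → p ∈ Hu {y, z, w})) := by
    intro P q1 q2 q3 q4
    rw [← i1] at q3
    rcases lt_or_gt_of_ne q4 with q | q
    · have q' : 0 < dR z w P := by rw [i6]; linarith
      obtain ⟨p, ⟨⟨⟨r1, r2⟩, r3⟩, r4⟩, hg⟩ := exists_gen ((((open_pos z x).inter (open_pos x y)).inter
        (open_pos y z)).inter (open_pos z w)) ⟨P, ⟨⟨q1, q2⟩, q3⟩, q'⟩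
      simp only [Set.mem_ofPred_eq] at r1 r2 r3 r4
      rw [i1] at r3
      rw [i6] at r4
      exact ⟨p, hg, (mA p hg).mpr ⟨r2, r3, r1⟩, fun hh => by linarith,
        fun _ => (mD p hg).mpr ⟨r3, r4, by linarith⟩⟩
    · have q' : 0 < dR w z P := by rw [i5]; exact q
      obtain ⟨p, ⟨⟨⟨r1, r2⟩, r3⟩, r4⟩, hg⟩ := exists_gen ((((open_pos z x).inter (open_pos x y)).inter
        (open_pos y z)).inter (open_pos w z)) ⟨P, ⟨⟨q1, q2⟩, q3⟩, q'⟩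
      simp only [Set.mem_ofPred_eq] at r1 r2 r3 r4
      rw [i1] at r3
      rw [i5] at r4
      exact ⟨p, hg, (mA p hg).mpr ⟨r2, r3, r1⟩,
        fun _ => (mC p hg).mpr ⟨by linarith, r4, r1⟩, fun hh => by linarith⟩
  -- the point with given coordinates
  have pt : ∀ s t : ℝ, ∃ P : ℝ × ℝ, dR z x P = s ∧ dR x y P = t := by
    intro s t
    refine ⟨(x.1 + s * (y.1 - x.1) + t * (z.1 - x.1), x.2 + s * (y.2 - x.2) + t * (z.2 - x.2)),
      ?_, ?_⟩
    · simp only [dR]; linear_combination s * hR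
    · simp only [dR]; linear_combination t * hR
  have hwA : w ∉ ({x, y, z} : Finset (ℤ × ℤ)) := by simp; grind
  have hC : ({x, z, w} : Finset (ℤ × ℤ)) ∉ T := by
    intro hh
    obtain ⟨P, e1, e2⟩ := pt (1/4) (1/4)
    obtain ⟨p, hg, hp, hp1, -⟩ := overlap P (by rw [e1]; norm_num) (by rw [e2]; norm_num)
      (by rw [e1, e2]; norm_num) (by rw [e1, e2]; norm_num)
    have := hI.2.2 p hg _ hA _ hh hp (hp1 (by rw [e1, e2]; norm_num))
    exact hwA (by rw [this]; simp)
  have hD : ({y, z, w} : Finset (ℤ × ℤ)) ∉ T := by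
    intro hh
    obtain ⟨P, e1, e2⟩ := pt (1/2) (1/4)
    obtain ⟨p, hg, hp, -, hp1⟩ := overlap P (by rw [e1]; norm_num) (by rw [e2]; norm_num)
      (by rw [e1, e2]; norm_num) (by rw [e1, e2]; norm_num)
    have := hI.2.2 p hg _ hA _ hh hp (hp1 (by rw [e1, e2]; norm_num))
    exact hwA (by rw [this]; simp)
  have subA := (hI.1 _ hA).2
  have subB := (hI.1 _ hB).2
  have tx : x ∈ TdPts d := subA (by simp)
  have ty : y ∈ TdPts d := subA (by simp)
  have tz : z ∈ TdPts d := subA (by simp)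
  have tw : w ∈ TdPts d := subB (by simp)
  have pC : IsPrimTriangle {x, z, w} := by rw [sC]; exact prim_of hCd
  have pD : IsPrimTriangle {y, z, w} := prim_of hDd
  have fC : phi {x, z, w} = 2 * (hz x w + hz w z + hz z x) := by rw [sC]; exact phi_tri hCd
  have fD := phi_tri hDd
  have fA := phi_tri h
  have fB : phi {x, y, w} = 2 * (hz y x + hz x w + hz w y) := by rw [sB]; exact phi_tri hBd
  have j1 : hz x w = hz y z := by unfold hz; rw [w1, w2]; ring
  have j2 : hz w y = hz z x := by unfold hz; rw [w1, w2]; ring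
  have r1 : ({z, w, x} : Finset (ℤ × ℤ)) = {x, z, w} := by ext; simp; tauto
  have r2 : ({z, w, y} : Finset (ℤ × ℤ)) = {y, z, w} := by ext; simp; tauto
  have r3 : ({z, x, y} : Finset (ℤ × ℤ)) = {x, y, z} := by ext; simp; tauto
  have r4 : ({w, x, y} : Finset (ℤ × ℤ)) = {x, y, w} := by ext; simp; tauto
  have flip1 : IsFlip T ((T \ {({x, y, z} : Finset (ℤ × ℤ)), ({x, y, w} : Finset (ℤ × ℤ))}) ∪
      {({x, z, w} : Finset (ℤ × ℤ)), ({y, z, w} : Finset (ℤ × ℤ))}) :=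
    ⟨x, y, z, w, hA, hB, nwz.symm, hw, rfl⟩
  have flip2 : IsFlip ((T \ {({x, y, z} : Finset (ℤ × ℤ)), ({x, y, w} : Finset (ℤ × ℤ))}) ∪
      {({x, z, w} : Finset (ℤ × ℤ)), ({y, z, w} : Finset (ℤ × ℤ))}) T := by
    refine ⟨z, w, x, y, by rw [r1]; simp, by rw [r2]; simp, nxy, hw.symm, ?_⟩
    rw [r1, r2, r3, r4]
    generalize ({x, y, z} : Finset (ℤ × ℤ)) = A at *
    generalize ({x, y, w} : Finset (ℤ × ℤ)) = B at *
    generalize ({x, z, w} : Finset (ℤ × ℤ)) = C at *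
    generalize ({y, z, w} : Finset (ℤ × ℤ)) = D at *
    ext t
    simp only [Finset.mem_union, Finset.mem_sdiff, Finset.mem_insert, Finset.mem_singleton]
    constructor
    · intro ht
      have : t ≠ C := by rintro rfl; exact hC ht
      have : t ≠ D := by rintro rfl; exact hD ht
      tauto
    · rintro (⟨h1 | h1, h2⟩ | rfl | rfl)
      · exact h1.1
      · exact absurd h1 h2
      · exact hA
      · exact hB
  refine ⟨_, ?_, flip1, flip2, ?_⟩
  · refine ⟨?_, ?_, ?_⟩
    · intro t ht
      simp only [Finset.mem_union, Finset.mem_sdiff, Finset.mem_insert, Finset.mem_singleton] at ht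
      rcases ht with ht | rfl | rfl
      · exact hI.1 t ht.1
      · refine ⟨pC, ?_⟩
        intro q hq; simp at hq; rcases hq with rfl | rfl | rfl <;> assumption
      · refine ⟨pD, ?_⟩
        intro q hq; simp at hq; rcases hq with rfl | rfl | rfl <;> assumption
    · intro p hg p1 p2 p3
      obtain ⟨t, ht, hp⟩ := hI.2.1 p hg p1 p2 p3
      have hc := (cov p hg).mp
      by_cases hAB : t = {x, y, z} ∨ t = {x, y, w}
      · rcases hc (by rcases hAB with rfl | rfl <;> tauto) with hh | hh
        · exact ⟨_, by simp, hh⟩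
        · exact ⟨{y, z, w}, by simp, hh⟩
      · refine ⟨t, ?_, hp⟩
        simp only [Finset.mem_union, Finset.mem_sdiff, Finset.mem_insert, Finset.mem_singleton]
        tauto
    · have key : ∀ p, Gen p → ∀ t ∈ T, ¬ (t = {x, y, z} ∨ t = {x, y, w}) → p ∈ Hu t →
          (p ∈ Hu {x, z, w} ∨ p ∈ Hu {y, z, w}) → False := by
        intro p hg t ht hn hp hcd
        rcases (cov p hg).mpr hcd with hh | hh
        · exact hn (Or.inl (hI.2.2 p hg _ ht _ hA hp hh))
        · exact hn (Or.inr (hI.2.2 p hg _ ht _ hB hp hh))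
      intro p hg t ht t' ht' hp hp'
      simp only [Finset.mem_union, Finset.mem_sdiff, Finset.mem_insert, Finset.mem_singleton]
        at ht ht'
      rcases ht with ht | rfl | rfl <;> rcases ht' with ht' | rfl | rfl
      · exact hI.2.2 p hg _ ht.1 _ ht'.1 hp hp'
      · exact (key p hg t ht.1 ht.2 hp (Or.inl hp')).elim
      · exact (key p hg t ht.1 ht.2 hp (Or.inr hp')).elim
      · exact (key p hg _ ht'.1 ht'.2 hp' (Or.inl hp)).elim
      · rfl
      · exact (disj p hg hp hp').elim
      · exact (key p hg _ ht'.1 ht'.2 hp' (Or.inr hp)).elim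
      · exact (disj p hg hp' hp).elim
      · rfl
  · have hCD : ({x, z, w} : Finset (ℤ × ℤ)) ≠ {y, z, w} := by
      intro e
      have : x ∈ ({y, z, w} : Finset (ℤ × ℤ)) := by rw [← e]; simp
      simp at this
      grind
    have s1 : Phi T = ∑ t ∈ T \ {({x, y, z} : Finset (ℤ × ℤ)), ({x, y, w} : Finset (ℤ × ℤ))}, phi t
        + (phi {x, y, z} + phi {x, y, w}) := by
      unfold Phi
      rw [← Finset.sum_pair hAB, Finset.sum_sdiff]
      intro t ht; simp only [Finset.mem_insert, Finset.mem_singleton] at ht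
      rcases ht with rfl | rfl <;> assumption
    have s2 : Phi ((T \ {({x, y, z} : Finset (ℤ × ℤ)), ({x, y, w} : Finset (ℤ × ℤ))}) ∪
        {({x, z, w} : Finset (ℤ × ℤ)), ({y, z, w} : Finset (ℤ × ℤ))}) =
        ∑ t ∈ T \ {({x, y, z} : Finset (ℤ × ℤ)), ({x, y, w} : Finset (ℤ × ℤ))}, phi t
        + (phi {x, z, w} + phi {y, z, w}) := by
      unfold Phi
      rw [Finset.sum_union, Finset.sum_pair hCD]
      rw [Finset.disjoint_right]
      intro t ht; simp only [Finset.mem_insert, Finset.mem_singleton] at ht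
      rcases ht with rfl | rfl <;> simp [hC, hD]
    rw [s1, s2, fA, fB, fC, fD, j1, j2, hz_symm w z, hz_symm y x]
    linarith

def Term (T : Finset (Finset (ℤ × ℤ))) : Prop :=
  ∀ a b c, {a, b, c} ∈ T → dZ a b c = 1 → hz a b ≤ 1

set_option maxHeartbeats 1000000 in
lemma step {d : ℕ} {T} (hI : TInv d T) (hT : ¬ Term T) :
    ∃ T', TInv d T' ∧ IsFlip T T' ∧ IsFlip T' T ∧ Phi T' < Phi T := by
  have hmax : ∃ x y z, ({x, y, z} : Finset (ℤ × ℤ)) ∈ T ∧ dZ x y z = 1 ∧ 1 < hz x y ∧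
      ∀ a b c, {a, b, c} ∈ T → dZ a b c = 1 → hz a b ≤ hz x y := by
    classical
    let V := T.sup id
    let S := (V ×ˢ V ×ˢ V).filter fun q => {q.1, q.2.1, q.2.2} ∈ T ∧ dZ q.1 q.2.1 q.2.2 = 1
    have hS : ∀ a b c, ({a, b, c} : Finset (ℤ × ℤ)) ∈ T → dZ a b c = 1 → (a, b, c) ∈ S := by
      intro a b c h1 h2
      have hle : ({a, b, c} : Finset (ℤ × ℤ)) ⊆ V := Finset.le_sup (f := id) h1
      simp only [S, Finset.mem_filter, Finset.mem_product]
      exact ⟨⟨hle (by simp), hle (by simp), hle (by simp)⟩, h1, h2⟩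
    unfold Term at hT
    push Not at hT
    obtain ⟨a, b, c, h1, h2, h3⟩ := hT
    obtain ⟨q, hq, hqm⟩ := Finset.exists_max_image S (fun q => hz q.1 q.2.1) ⟨_, hS a b c h1 h2⟩
    have hq' := (Finset.mem_filter.mp hq).2
    refine ⟨q.1, q.2.1, q.2.2, hq'.1, hq'.2, ?_, ?_⟩
    · exact lt_of_lt_of_le h3 (hqm _ (hS a b c h1 h2))
    · intro a b c h1 h2
      exact hqm _ (hS a b c h1 h2)
  obtain ⟨x, y, z, hA, h, h1, hm⟩ := hmax
  have subA := (hI.1 _ hA).2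
  have tx : x ∈ TdPts d := subA (by simp)
  have ty : y ∈ TdPts d := subA (by simp)
  obtain ⟨tx1, tx2, tx3⟩ := tx
  obtain ⟨ty1, ty2, ty3⟩ := ty
  have unit : ∀ u v : ℤ, u * v = 1 → u ^ 2 = 1 := by
    intro u v huv
    rcases Int.eq_one_or_neg_one_of_mul_eq_one huv with rfl | rfl <;> norm_num
  have hb1 : 0 < x.1 + y.1 := by
    by_contra! hc
    have e : y.1 - x.1 = 0 := by omega
    have := unit (y.2 - x.2) (-(z.1 - x.1)) (by unfold dZ at h; rw [e] at h; linarith)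
    unfold hz at h1; rw [e] at h1; linarith
  have hb2 : 0 < x.2 + y.2 := by
    by_contra! hc
    have e : y.2 - x.2 = 0 := by omega
    have := unit (y.1 - x.1) (z.2 - x.2) (by unfold dZ at h; rw [e] at h; linarith)
    unfold hz at h1; rw [e] at h1; linarith
  have hb3 : x.1 + x.2 + y.1 + y.2 < 2 * d := by
    by_contra! hc
    have e : y.2 - x.2 = - (y.1 - x.1) := by omega
    have := unit (y.1 - x.1) ((z.2 - x.2) + (z.1 - x.1)) (by unfold dZ at h; rw [e] at h; linarith)
    unfold hz at h1; rw [e] at h1; linarith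
  obtain ⟨w, hB, hBd⟩ := neighbor hI hA h hb1 hb2 hb3
  have o1 := obtuse h (hm y z x (by rwa [rot_set]) (by rwa [dZ_rot]))
    (hm z x y (by rwa [← rot_set]) (by rwa [← dZ_rot])) h1
  have sy : hz y x = hz x y := hz_symm _ _
  have o2 := obtuse hBd (by rw [sy]; exact hm x w y (by rwa [rot_set]) (by rwa [dZ_rot]))
    (by rw [sy]; exact hm w y x (by rwa [← rot_set]) (by rwa [← dZ_rot])) (by rwa [sy])
  rw [sy] at o2
  obtain ⟨n, hn⟩ : ∃ n, n = (z.1 + w.1 - 2 * x.1) * (z.2 - x.2) -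
    (z.2 + w.2 - 2 * x.2) * (z.1 - x.1) := ⟨_, rfl⟩
  have hl : dZ x y z + dZ y x w = 2 := by rw [h, hBd]; rfl
  have e1 : z.1 + w.1 - 2 * x.1 = n * (y.1 - x.1) := by
    unfold dZ at *
    linear_combination (-(z.1 + w.1 - 2 * x.1)) * h + (z.1 - x.1) * (h - hBd) - (y.1 - x.1) * hn
  have e2 : z.2 + w.2 - 2 * x.2 = n * (y.2 - x.2) := by
    unfold dZ at *
    linear_combination (-(z.2 + w.2 - 2 * x.2)) * h + (z.2 - x.2) * (h - hBd) - (y.2 - x.2) * hn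
  have hsum : (hz z x + hz x y - hz y z) + (hz x w + hz x y - hz w y) = 2 * n * hz x y := by
    have : (hz z x + hz x y - hz y z) + (hz x w + hz x y - hz w y) =
        (2 * (y.1 - x.1) + (y.2 - x.2)) * (z.1 + w.1 - 2 * x.1) +
        (2 * (y.2 - x.2) + (y.1 - x.1)) * (z.2 + w.2 - 2 * x.2) := by
      unfold hz; ring
    rw [this, e1, e2]; unfold hz; ring
  have q1 := hz_nonneg z x
  have q2 := hz_nonneg y z
  have q3 := hz_nonneg x w
  have q4 := hz_nonneg w y
  have hn1 : n = 1 := by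
    have h0 : 0 < hz x y := by linarith
    have : 0 < n := by
      by_contra! hc
      have := mul_nonpos_of_nonpos_of_nonneg hc h0.le
      linarith
    have : n < 2 := by
      by_contra! hc
      have := mul_le_mul_of_nonneg_right hc h0.le
      linarith
    omega
  subst hn1
  have w1 : w.1 = x.1 + y.1 - z.1 := by linarith
  have w2 : w.2 = x.2 + y.2 - z.2 := by linarith
  have sB : ({x, y, w} : Finset (ℤ × ℤ)) = {y, x, w} := by ext; simp; tauto
  refine flip_step (w := w) hI (Prod.ext (by simp [w1]) (by simp [w2])) hA (by rwa [sB]) h ?_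
  have : hz z w + hz x y = 2 * (hz y z + hz z x) := by
    unfold hz; rw [w1, w2]; ring
  linarith

lemma reach {d : ℕ} : ∀ (n : ℕ) (T), TInv d T → Phi T ≤ n →
    ∃ T', TInv d T' ∧ Term T' ∧ Relation.ReflTransGen IsFlip T T' ∧
      Relation.ReflTransGen IsFlip T' T := by
  intro n
  induction n with
  | zero =>
    intro T hI hn
    by_cases hT : Term T
    · exact ⟨T, hI, hT, .refl, .refl⟩
    · obtain ⟨T', h1, h2, h3, h4⟩ := step hI hT
      have := Phi_nonneg T'
      push_cast at hn
      omega
  | succ n ih =>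
    intro T hI hn
    by_cases hT : Term T
    · exact ⟨T, hI, hT, .refl, .refl⟩
    · obtain ⟨T', h1, h2, h3, h4⟩ := step hI hT
      obtain ⟨T'', k1, k2, k3, k4⟩ := ih T' h1 (by push_cast at hn; omega)
      exact ⟨T'', k1, k2, .head h2 k3, .tail k4 h3⟩

lemma std_shape {a b c : ℤ × ℤ} (h : dZ a b c = 1) (h1 : hz a b ≤ 1) (h2 : hz b c ≤ 1)
    (h3 : hz c a ≤ 1) : ∃ i j : ℤ,
      (({a, b, c} : Finset (ℤ × ℤ)) = {(i, j), (i + 1, j), (i, j + 1)} ∧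
        dZ (i, j) (i + 1, j) (i, j + 1) = 1) ∨
      (({a, b, c} : Finset (ℤ × ℤ)) = {(i + 1, j), (i + 1, j + 1), (i, j + 1)} ∧
        dZ (i + 1, j) (i + 1, j + 1) (i, j + 1) = 1) := by
  have bd : ∀ u v : ℤ, u ^ 2 + u * v + v ^ 2 ≤ 1 → (-1 ≤ u ∧ u ≤ 1) ∧ (-1 ≤ v ∧ v ≤ 1) := by
    intro u v h
    refine ⟨⟨?_, ?_⟩, ?_, ?_⟩ <;> nlinarith [sq_nonneg (u + 2 * v), sq_nonneg (2 * u + v)]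
  have u1 : ∀ i j : ℤ, dZ (i, j) (i + 1, j) (i, j + 1) = 1 := by intro i j; simp [dZ]
  have u2 : ∀ i j : ℤ, dZ (i + 1, j) (i + 1, j + 1) (i, j + 1) = 1 := by intro i j; simp [dZ]
  obtain ⟨a1, a2⟩ := a
  obtain ⟨b1, b2⟩ := b
  obtain ⟨c1, c2⟩ := c
  simp only [u1, u2, and_true]
  unfold hz dZ at *
  simp only at *
  obtain ⟨u, rfl⟩ : ∃ u, b1 = a1 + u := ⟨b1 - a1, by ring⟩
  obtain ⟨v, rfl⟩ : ∃ v, b2 = a2 + v := ⟨b2 - a2, by ring⟩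
  obtain ⟨s, rfl⟩ : ∃ s, c1 = a1 + s := ⟨c1 - a1, by ring⟩
  obtain ⟨t, rfl⟩ : ∃ t, c2 = a2 + t := ⟨c2 - a2, by ring⟩
  have k1 := bd u v (by nlinarith)
  have k3 := bd s t (by nlinarith)
  obtain ⟨⟨l1, l2⟩, l3, l4⟩ := k1
  obtain ⟨⟨m1, m2⟩, m3, m4⟩ := k3
  have h2' : (s - u) ^ 2 + (s - u) * (t - v) + (t - v) ^ 2 ≤ 1 := by nlinarith
  have h1' : u ^ 2 + u * v + v ^ 2 ≤ 1 := by nlinarith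
  have h3' : s ^ 2 + s * t + t ^ 2 ≤ 1 := by nlinarith
  have h' : u * t - v * s = 1 := by nlinarith
  clear h1 h2 h3 h bd u1 u2
  have hcase : (u = 1 ∧ v = 0 ∧ s = 0 ∧ t = 1) ∨ (u = 0 ∧ v = 1 ∧ s = -1 ∧ t = 1) ∨
      (u = -1 ∧ v = 1 ∧ s = -1 ∧ t = 0) ∨ (u = -1 ∧ v = 0 ∧ s = 0 ∧ t = -1) ∨
      (u = 0 ∧ v = -1 ∧ s = 1 ∧ t = -1) ∨ (u = 1 ∧ v = -1 ∧ s = 1 ∧ t = 0) := by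
    interval_cases u <;> interval_cases v <;> interval_cases s <;> interval_cases t <;> omega
  rcases hcase with ⟨rfl, rfl, rfl, rfl⟩ | ⟨rfl, rfl, rfl, rfl⟩ | ⟨rfl, rfl, rfl, rfl⟩ |
    ⟨rfl, rfl, rfl, rfl⟩ | ⟨rfl, rfl, rfl, rfl⟩ | ⟨rfl, rfl, rfl, rfl⟩
  · refine ⟨a1, a2, Or.inl ?_⟩
    ext ⟨p, q⟩; simp only [Finset.mem_insert, Finset.mem_singleton, Prod.mk.injEq]; omega
  · refine ⟨a1 - 1, a2, Or.inr ?_⟩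
    ext ⟨p, q⟩; simp only [Finset.mem_insert, Finset.mem_singleton, Prod.mk.injEq]; omega
  · refine ⟨a1 - 1, a2, Or.inl ?_⟩
    ext ⟨p, q⟩; simp only [Finset.mem_insert, Finset.mem_singleton, Prod.mk.injEq]; omega
  · refine ⟨a1 - 1, a2 - 1, Or.inr ?_⟩
    ext ⟨p, q⟩; simp only [Finset.mem_insert, Finset.mem_singleton, Prod.mk.injEq]; omega
  · refine ⟨a1, a2 - 1, Or.inl ?_⟩
    ext ⟨p, q⟩; simp only [Finset.mem_insert, Finset.mem_singleton, Prod.mk.injEq]; omega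
  · refine ⟨a1, a2 - 1, Or.inr ?_⟩
    ext ⟨p, q⟩; simp only [Finset.mem_insert, Finset.mem_singleton, Prod.mk.injEq]; omega

lemma std_floor {d : ℕ} {T} (hI : TInv d T) (hT : Term T) {t} (ht : t ∈ T) {p : ℝ × ℝ}
    (hg : Gen p) (hp : p ∈ Hu t) :
    (t = {(⌊p.1⌋, ⌊p.2⌋), (⌊p.1⌋ + 1, ⌊p.2⌋), (⌊p.1⌋, ⌊p.2⌋ + 1)} ∧
      p.1 + p.2 < ⌊p.1⌋ + ⌊p.2⌋ + 1) ∨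
    (t = {(⌊p.1⌋ + 1, ⌊p.2⌋), (⌊p.1⌋ + 1, ⌊p.2⌋ + 1), (⌊p.1⌋, ⌊p.2⌋ + 1)} ∧
      ⌊p.1⌋ + ⌊p.2⌋ + 1 < p.1 + p.2) := by
  obtain ⟨a, b, c, rfl, h⟩ := ccw_exists (hI.1 t ht).1
  have h1 := hT a b c ht h
  have h2 := hT b c a (by rwa [rot_set]) (by rwa [dZ_rot])
  have h3 := hT c a b (by rwa [← rot_set]) (by rwa [← dZ_rot])
  obtain ⟨i, j, ⟨e, hd⟩ | ⟨e, hd⟩⟩ := std_shape h h1 h2 h3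
  · rw [e] at hp ⊢
    rw [mem_Hu_gen hd hg] at hp
    simp only [dR] at hp
    push_cast at hp
    obtain ⟨p1, p2, p3⟩ := hp
    have f1 : ⌊p.1⌋ = i := by rw [Int.floor_eq_iff]; constructor <;> linarith
    have f2 : ⌊p.2⌋ = j := by rw [Int.floor_eq_iff]; constructor <;> linarith
    rw [f1, f2]
    left; exact ⟨rfl, by linarith⟩
  · rw [e] at hp ⊢
    rw [mem_Hu_gen hd hg] at hp
    simp only [dR] at hp
    push_cast at hp
    obtain ⟨p1, p2, p3⟩ := hp
    have f1 : ⌊p.1⌋ = i := by rw [Int.floor_eq_iff]; constructor <;> linarith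
    have f2 : ⌊p.2⌋ = j := by rw [Int.floor_eq_iff]; constructor <;> linarith
    rw [f1, f2]
    right; exact ⟨rfl, by linarith⟩

lemma term_sub {d : ℕ} {T T'} (hI : TInv d T) (hT : Term T) (hI' : TInv d T') (hT' : Term T') :
    T ⊆ T' := by
  intro t ht
  obtain ⟨a, b, c, e, h⟩ := ccw_exists (hI.1 t ht).1
  have hsub := (hI.1 t ht).2
  rw [e] at hsub
  have hR : ((b.1 : ℝ) - a.1) * (c.2 - a.2) - (b.2 - a.2) * (c.1 - a.1) = 1 := by
    unfold dZ at h; exact_mod_cast h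
  obtain ⟨p, ⟨⟨p1, p2⟩, p3⟩, hg⟩ := exists_gen (((open_pos a b).inter (open_pos b c)).inter
    (open_pos c a)) ⟨(((a.1 : ℝ) + b.1 + c.1) / 3, ((a.2 : ℝ) + b.2 + c.2) / 3), by
      refine ⟨⟨?_, ?_⟩, ?_⟩ <;> simp only [Set.mem_ofPred_eq, dR] <;> nlinarith⟩
  have hp : p ∈ Hu t := by rw [e, mem_Hu_gen h hg]; exact ⟨p1, p2, p3⟩
  -- `p` lies in the big triangle
  have hbig : ∀ α β γ : ℤ, (∀ q ∈ TdPts d, 0 ≤ α * q.1 + β * q.2 + γ) → ¬ (α = 0 ∧ β = 0) →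
      0 < α * p.1 + β * p.2 + γ := by
    intro α β γ hq hne
    have hc : Convex ℝ {p : ℝ × ℝ | 0 ≤ α * p.1 + β * p.2 + γ} := by
      intro p hp q hq s t hs ht hst
      simp only [Set.mem_ofPred_eq] at *
      have : s = 1 - t := by linarith
      subst this
      simp only [Prod.fst_add, Prod.snd_add, Prod.smul_fst, Prod.smul_snd, smul_eq_mul]
      nlinarith [mul_nonneg hs hp, mul_nonneg ht hq]
    have h0 : 0 ≤ α * p.1 + β * p.2 + γ := by
      refine convexHull_min (t := {p : ℝ × ℝ | 0 ≤ α * p.1 + β * p.2 + γ}) ?_ hc hp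
      rintro _ ⟨q, hqt, rfl⟩
      have := hq q ((hI.1 t ht).2 hqt)
      simp only [Set.mem_ofPred_eq, toRp]
      exact_mod_cast this
    refine lt_of_le_of_ne h0 fun h0 => hne (hg α β (-γ) (by push_cast; linarith))
  have b1 := hbig 1 0 0 (by rintro q ⟨h1, h2, h3⟩; linarith) (by simp)
  have b2 := hbig 0 1 0 (by rintro q ⟨h1, h2, h3⟩; linarith) (by simp)
  have b3 := hbig (-1) (-1) d (by rintro q ⟨h1, h2, h3⟩; linarith) (by simp)
  push_cast at b1 b2 b3
  obtain ⟨t', ht', hp'⟩ := hI'.2.1 p hg (by linarith) (by linarith) (by linarith)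
  have s1 := std_floor hI hT ht hg hp
  have s2 := std_floor hI' hT' ht' hg hp'
  have : t = t' := by
    rcases s1 with ⟨e1, l1⟩ | ⟨e1, l1⟩ <;> rcases s2 with ⟨e2, l2⟩ | ⟨e2, l2⟩
    · rw [e1, e2]
    · linarith
    · linarith
    · rw [e1, e2]
  rw [this]; exact ht'

/-- Any two primitive regular integer triangulations of `T_d` are connected by
a finite sequence of flips. -/
theorem stmt_17 (d : ℕ) (hd : 1 ≤ d) (T T' : Finset (Finset (ℤ × ℤ)))
    (hT : IsPrimTriangulation d T) (hTreg : IsRegularTriangulation d T)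
    (hT' : IsPrimTriangulation d T') (hT'reg : IsRegularTriangulation d T') :
    Relation.ReflTransGen IsFlip T T' := by
  have hI := inv_of hd hT
  have hI' := inv_of hd hT'
  obtain ⟨S, s1, s2, s3, _⟩ := reach (Phi T).toNat T hI (Int.self_le_toNat _)
  obtain ⟨S', s1', s2', _, s4'⟩ := reach (Phi T').toNat T' hI' (Int.self_le_toNat _)
  have : S = S' := (term_sub s1 s2 s1' s2').antisymm (term_sub s1' s2' s1 s2)
  subst this
  exact s3.trans s4'

end
end
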